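/- Suppose Γ is additively closed and π and all elements of Γ are algebraic over K, and let ξ ∈ A_v be algebraic over K. Then Γ + ξ := {γ + ξ : γ ∈ Γ} is a complete set of representatives of A_v/πA_v, and for every x ∈ K_v with expansion x = ∑_{n≥m} b_n πⁿ with respect to (Γ + ξ, π), x is algebraic over K if and only if the sequence {b_n}_{n≥m} is p-automatic; that is, (Γ + ξ, π) has property B. -/

import Mathlib

/-!
Common setup: `Kv` is a complete field equipped with a (normalized, `ℤ`-valued)
valuation `Valued.v : Kv → ℤₘ₀ = WithZero (Multiplicative ℤ)`, and `K` is a dense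
subfield of `Kv` (so that `Kv` is the completion `K_v` of `K`).  The valuation is
written multiplicatively: the additive valuation of `x` is `n` iff
`Valued.v x = ofAdd (-n)`; the valuation ring `A_v` is `{x | Valued.v x ≤ 1}` and
`π A_v = {x | Valued.v x ≤ Valued.v π}`.
-/

open scoped Multiplicative

/-- The multiplicative value monoid `ℤₘ₀` for normalized `ℤ`-valued valuations. -/
abbrev ZM0 : Type := WithZero (Multiplicative ℤ)

/-- A sequence `b : ℕ → α` is `k`-automatic if its `k`-kernel
`{ (b (n k^i + j))_n : i ≥ 0, 0 ≤ j < k^i }` is finite. -/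
def IsKAutomatic {α : Type*} (k : ℕ) (b : ℕ → α) : Prop :=
  {c : ℕ → α | ∃ i j : ℕ, j < k ^ i ∧ c = fun n => b (n * k ^ i + j)}.Finite

/-- The sequence `{a n}_{n ≥ m}` is ultimately periodic: there are `N ≥ m` and
`L > 0` with `a (n + L) = a n` for all `n ≥ N`. -/
def UltimatelyPeriodic {α : Type*} (m : ℤ) (a : ℤ → α) : Prop :=
  ∃ N L : ℤ, m ≤ N ∧ 0 < L ∧ ∀ n : ℤ, N ≤ n → a (n + L) = a n

variable {Kv : Type*} [Field Kv] [Valued Kv ZM0]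

/-- `x = ∑_{n ≥ m} a_n π^n` is the expansion of `x` with respect to `(Γ, π)`:
all digits `a n` for `n ≥ m` lie in `Γ` and the series converges to `x`. -/
def IsExpansion (π : Kv) (Γ : Set Kv) (m : ℤ) (a : ℤ → Kv) (x : Kv) : Prop :=
  (∀ n : ℤ, m ≤ n → a n ∈ Γ) ∧
    HasSum (fun n : ℕ => a (m + n) * π ^ (m + (n : ℤ))) x

/-- `Γ ⊆ A_v` is a complete set of representatives of `A_v / π A_v`: reduction
modulo `π A_v` maps `Γ` bijectively onto `A_v / π A_v`. -/
def IsCompleteSetOfReps (π : Kv) (Γ : Set Kv) : Prop :=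
  (∀ γ ∈ Γ, Valued.v γ ≤ 1) ∧
    ∀ x : Kv, Valued.v x ≤ 1 → ∃! γ, γ ∈ Γ ∧ Valued.v (x - γ) ≤ Valued.v π

/-- `(Γ, π)` has property A: for every `x ∈ K_v`, `x` is rational (i.e. `x ∈ K`)
iff the digit sequence of the expansion of `x` w.r.t. `(Γ, π)` is ultimately
periodic. -/
def HasPropertyA (K : Subfield Kv) (π : Kv) (Γ : Set Kv) : Prop :=
  ∀ (x : Kv) (m : ℤ) (a : ℤ → Kv), IsExpansion π Γ m a x →
    (x ∈ K ↔ UltimatelyPeriodic m a)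

/-- `(Γ, π)` has property B: for every `x ∈ K_v`, `x` is algebraic over `K` iff
the digit sequence of the expansion of `x` w.r.t. `(Γ, π)` is `p`-automatic. -/
def HasPropertyB (p : ℕ) (K : Subfield Kv) (π : Kv) (Γ : Set Kv) : Prop :=
  ∀ (x : Kv) (m : ℤ) (a : ℤ → Kv), IsExpansion π Γ m a x →
    (IsAlgebraic ↥K x ↔ IsKAutomatic p fun n : ℕ => a (m + n))

/-- The degree `[S : F]` of a subset `S ⊆ Kv` over a subfield `F ⊆ Kv` (intended
for `F ⊆ S` with `S` a field): the rank of the `F`-span of `S` in `Kv`. -/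
noncomputable def degOver (F : Subfield Kv) (S : Set Kv) : Cardinal :=
  Module.rank ↥F ↥(Submodule.span ↥F S)

/-- `Kv` is the completion of a global function field `K` of characteristic `p`
with respect to a normalized nontrivial valuation:  `Kv` has characteristic `p`
and is complete, `K` is dense in `Kv`, the valuation takes every value `ofAdd n`
(`n ∈ ℤ`) on `K` (normalization/nontriviality), and `K` contains an element `x₀`
transcendental over the prime field `𝔽_p = ⊥` with `[K : 𝔽_p(x₀)] < ∞`. -/
structure IsGlobalFunctionFieldCompletion (p : ℕ) (K : Subfield Kv) : Prop where
  charP : CharP Kv p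
  complete : CompleteSpace Kv
  dense : Dense (K : Set Kv)
  normalized : ∀ n : ℤ, ∃ x ∈ K,
    Valued.v x = ((Multiplicative.ofAdd n : Multiplicative ℤ) : ZM0)
  globalFunctionField : ∃ x₀ ∈ K, Transcendental (⊥ : Subfield Kv) x₀ ∧
    degOver (Subfield.closure {x₀}) (K : Set Kv) < Cardinal.aleph0

/-- The constant field `𝔽_q` of `K`: the algebraic closure of `𝔽_p` in `K`,
i.e. the elements of `K` fixed by some positive power of the Frobenius. -/
def ConstantField (p : ℕ) (K : Subfield Kv) : Set Kv :=
  {x : Kv | x ∈ K ∧ ∃ n : ℕ, 0 < n ∧ x ^ p ^ n = x}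

/-- The subfield `𝔽_q(π)` of `Kv` generated by `π` over the constant field. -/
def FqPi (p : ℕ) (K : Subfield Kv) (π : Kv) : Subfield Kv :=
  Subfield.closure (ConstantField p K ∪ {π})

/-- `𝔽_q((π))`: the completion of `𝔽_q(π)`, i.e. its closure in `Kv`. -/
noncomputable def FqPiCompletion (p : ℕ) (K : Subfield Kv) (π : Kv) : Subfield Kv :=
  (FqPi p K π).topologicalClosure


section PartA
open Polynomial IntermediateField Field

theorem prim_aux (F : Type*) [Field F] [Infinite F] {E : Type*} [Field E] [Algebra F E] (α β : E)
    (hα : IsIntegral F α) (hβs : IsSeparable F β) : ∃ γ : E, F⟮α, β⟯ = F⟮γ⟯ := by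
  have hβ := hβs.isIntegral
  let f := minpoly F α
  let g := minpoly F β
  let ιFE := algebraMap F E
  let ιEE' := algebraMap E (SplittingField (g.map ιFE))
  obtain ⟨c, hc⟩ := primitive_element_inf_aux_exists_c (ιEE'.comp ιFE) (ιEE' α) (ιEE' β) f g
  let γ := α + c • β
  suffices β_in_Fγ : β ∈ F⟮γ⟯ by
    use γ
    apply le_antisymm
    · rw [adjoin_le_iff]
      have α_in_Fγ : α ∈ F⟮γ⟯ := by
        rw [← add_sub_cancel_right α (c • β)]
        exact F⟮γ⟯.sub_mem (mem_adjoin_simple_self F γ) (F⟮γ⟯.toSubalgebra.smul_mem β_in_Fγ c)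
      rintro x (rfl | rfl) <;> assumption
    · rw [adjoin_simple_le_iff]
      have α_in_Fαβ : α ∈ F⟮α, β⟯ := subset_adjoin F {α, β} (Set.mem_insert α {β})
      have β_in_Fαβ : β ∈ F⟮α, β⟯ := subset_adjoin F {α, β} (Set.mem_insert_of_mem α rfl)
      exact F⟮α, β⟯.add_mem α_in_Fαβ (F⟮α, β⟯.smul_mem β_in_Fαβ)
  classical
  let p := EuclideanDomain.gcd ((f.map (algebraMap F F⟮γ⟯)).comp
    (C (AdjoinSimple.gen F γ) - (C ↑c : F⟮γ⟯[X]) * X)) (g.map (algebraMap F F⟮γ⟯))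
  let h := EuclideanDomain.gcd ((f.map ιFE).comp (C γ - C (ιFE c) * X)) (g.map ιFE)
  have map_g_ne_zero : g.map ιFE ≠ 0 := map_ne_zero (minpoly.ne_zero hβ)
  have h_ne_zero : h ≠ 0 :=
    mt EuclideanDomain.gcd_eq_zero_iff.mp (not_and.mpr fun _ => map_g_ne_zero)
  suffices p_linear : p.map (algebraMap F⟮γ⟯ E) = C h.leadingCoeff * (X - C β) by
    have finale : β = algebraMap F⟮γ⟯ E (-p.coeff 0 / p.coeff 1) := by
      simp [map_div₀, map_neg, ← coeff_map, ← coeff_map, p_linear,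
        mul_sub, coeff_C, mul_div_cancel_left₀ β (mt leadingCoeff_eq_zero.mp h_ne_zero)]
    rw [finale]
    exact Subtype.mem (-p.coeff 0 / p.coeff 1)
  have h_sep : h.Separable := separable_gcd_right _ (.map hβs)
  have h_root : h.eval β = 0 := by
    apply eval_gcd_eq_zero
    · rw [eval_comp, eval_sub, eval_mul, eval_C, eval_C, eval_X, eval_map_algebraMap, ←
        Algebra.smul_def, add_sub_cancel_right, minpoly.aeval]
    · rw [eval_map_algebraMap, minpoly.aeval]
  have h_splits : Splits (h.map ιEE') := by
    rw [← Polynomial.gcd_map]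
    exact (SplittingField.splits _).of_dvd (map_ne_zero map_g_ne_zero)
      (EuclideanDomain.gcd_dvd_right _ _)
  have h_roots : ∀ x ∈ (h.map ιEE').roots, x = ιEE' β := by
    intro x hx
    rw [mem_roots_map h_ne_zero] at hx
    specialize hc (ιEE' γ - ιEE' (ιFE c) * x) (by
      have f_root := root_left_of_root_gcd hx
      rw [eval₂_comp, eval₂_sub, eval₂_mul, eval₂_C, eval₂_C, eval₂_X, eval₂_map] at f_root
      exact (mem_roots_map (minpoly.ne_zero hα)).mpr f_root)
    specialize hc x (by
      rw [mem_roots_map (minpoly.ne_zero hβ), ← eval₂_map]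
      exact root_right_of_root_gcd hx)
    by_contra a
    apply hc
    apply (div_eq_iff (sub_ne_zero.mpr a)).mpr
    simp only [γ, Algebra.smul_def, map_add, map_mul, RingHom.comp_apply]
    ring
  rw [← eq_X_sub_C_of_separable_of_root_eq h_sep h_root h_splits h_roots]
  trans EuclideanDomain.gcd (?_ : E[X]) (?_ : E[X])
  · dsimp only [γ]
    convert! (gcd_map (algebraMap F⟮γ⟯ E)).symm
  · simp only [map_comp, Polynomial.map_map, ← IsScalarTower.algebraMap_eq, Polynomial.map_sub,
      map_C, AdjoinSimple.algebraMap_gen, Polynomial.map_mul, map_X]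
    congr

theorem eq_adjoin_of_prim (F M : Type*) [Field F] [Field M] [Algebra F M]
    (S : IntermediateField F M) (β : S) (h : F⟮β⟯ = ⊤) : S = F⟮(β : M)⟯ := by
  rw [← lift_adjoin_simple, h, lift_top]

theorem simple_gen_aux (k F M : Type*) [Field k] [Field F] [Field M] [Algebra k F] [Algebra k M]
    [Algebra F M] [IsScalarTower k F M] [Infinite F] [FiniteDimensional F M] (t : M)
    [Algebra.IsSeparable k⟮t⟯ M] : ∃ γ : M, F⟮γ⟯ = ⊤ := by
  obtain ⟨β', hβ'⟩ := Field.exists_primitive_element F (separableClosure F M)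
  have hβs : IsSeparable F (β' : M) := mem_separableClosure_iff.1 β'.2
  obtain ⟨γ, hγ⟩ := prim_aux F t (β' : M) (Algebra.IsIntegral.isIntegral t) hβs
  refine ⟨γ, ?_⟩
  rw [← hγ]
  set N := F⟮t, (β' : M)⟯ with hN
  have hle : k⟮t⟯ ≤ N.restrictScalars k := by
    rw [adjoin_simple_le_iff]
    exact subset_adjoin F _ (by simp)
  have hscl : separableClosure F M ≤ N := by
    have h1 := eq_adjoin_of_prim F M _ β' hβ'
    rw [h1, adjoin_simple_le_iff]
    exact subset_adjoin F _ (by simp)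
  have hpi : IsPurelyInseparable N M := (separableClosure_le_iff _ _ N).1 hscl
  rw [eq_top_iff]
  intro x _
  have hx : IsSeparable k⟮t⟯ x := Algebra.IsSeparable.isSeparable _ x
  let _ : Algebra k⟮t⟯ N := (IntermediateField.inclusion hle).toRingHom.toAlgebra
  have : IsScalarTower k⟮t⟯ N M := IsScalarTower.of_algebraMap_eq fun _ => rfl
  obtain ⟨y, hy⟩ := IsPurelyInseparable.inseparable N x (hx.tower_top N)
  rw [← hy]
  exact y.2

/-- simple generation over `k(π)`. -/
theorem simple_gen (k F M : Type*) [Field k] [PerfectField k] [Field F] [Field M] [Algebra k F]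
    [Algebra k M] [Algebra F M] [IsScalarTower k F M]
    [Algebra.EssFiniteType k M] (π : F) (hπ : Transcendental k π) (hF : k⟮π⟯ = ⊤)
    [Algebra.IsAlgebraic F M] : ∃ γ : M, F⟮γ⟯ = ⊤ := by
  have : Algebra.EssFiniteType F M := Algebra.EssFiniteType.of_comp k _ _
  have : FiniteDimensional F M := Algebra.finite_of_essFiniteType_of_isAlgebraic
  have hinf : Infinite F := by
    have hinj := transcendental_iff_injective.1 hπ
    refine Infinite.of_injective (fun n : ℕ => π ^ n) ?_
    intro a b hab
    have h2 : (X : k[X]) ^ a = X ^ b := hinj (by simpa using hab)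
    simpa using congrArg natDegree h2
  obtain ⟨s, hs, hsep⟩ := exists_isTranscendenceBasis_and_isSeparable_of_perfectField k M
  have hb : IsTranscendenceBasis k (fun _ : Unit => π) := by
    rw [isTranscendenceBasis_iff_algebraicIndependent_isAlgebraic,
      algebraicIndependent_unique_type_iff]
    refine ⟨hπ, ?_⟩
    rw [Set.range_const, ← IntermediateField.isAlgebraic_adjoin_iff_top, hF]
    exact ⟨fun x => isAlgebraic_algebraMap (⟨x, trivial⟩ : (⊤ : IntermediateField k F))⟩
  have hb' := hb.algebraMap_comp (A := M)
  have hcard : ∃ t : M, (s : Set M) = {t} := by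
    have := hs.lift_cardinalMk_eq hb'
    have h1 : s.card = 1 := by simpa using this
    obtain ⟨t, ht⟩ := Finset.card_eq_one.1 h1
    exact ⟨t, by simp [ht]⟩
  obtain ⟨t, ht⟩ := hcard
  rw [ht] at hsep
  exact simple_gen_aux k F M t

theorem simple_gen' (k Ω : Type*) [Field k] [PerfectField k] [Field Ω] [Algebra k Ω] (π : Ω)
    (hπ : Transcendental k π) (S : Set Ω) (hS : S.Finite) (hSa : ∀ x ∈ S, IsAlgebraic k⟮π⟯ x) :
    ∃ γ : Ω, IsIntegral k⟮π⟯ γ ∧ S ⊆ k⟮π⟯⟮γ⟯ := by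
  set F := k⟮π⟯ with hF
  set M := IntermediateField.adjoin F S with hM
  have : Algebra.IsAlgebraic F M := IntermediateField.isAlgebraic_adjoin
    (fun x hx => (hSa x hx).isIntegral)
  have h1 : Algebra.EssFiniteType k F :=
    IntermediateField.essFiniteType_iff.2 (IntermediateField.fg_adjoin_of_finite (Set.finite_singleton π))
  have h2 : Algebra.EssFiniteType F M :=
    IntermediateField.essFiniteType_iff.2 (IntermediateField.fg_adjoin_of_finite hS)
  have h3 : Algebra.EssFiniteType k M := Algebra.EssFiniteType.comp k F M
  obtain ⟨γ, hγ⟩ := simple_gen k F M (AdjoinSimple.gen k π) 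
    (by
      have := (transcendental_algebraMap_iff (R := k) (A := Ω) (a := AdjoinSimple.gen k π) (algebraMap F Ω).injective).1
      exact this (by simpa using hπ))
    (by
      apply IntermediateField.lift_injective
      rw [lift_adjoin_simple, lift_top]; simp [hF])
  refine ⟨γ, ?_, ?_⟩
  · exact (Algebra.IsIntegral.isIntegral (R := F) γ).algebraMap
  · rw [← eq_adjoin_of_prim F Ω M γ hγ]
    exact subset_adjoin F S

/-- coordinates of algebraic elements are algebraic -/
theorem coords_alg (F Ω : Type*) [Field F] [Field Ω] [Algebra F Ω] (L : IntermediateField F Ω)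
    {ι : Type*} [Fintype ι] (e : ι → Ω)
    (hli : LinearIndependent L e) (hsp : ⊤ ≤ Submodule.span L (Set.range e))
    (γ : Ω) (hγ : IsIntegral F γ) (heγ : ∀ i, e i ∈ F⟮γ⟯) (Y : ι → L)
    (hy : ∑ i, (Y i : Ω) * e i ∈ F⟮γ⟯) (i : ι) : IsAlgebraic F (Y i : Ω) := by
  classical
  let b := Module.Basis.mk hli hsp
  have hfin : FiniteDimensional L Ω := b.finiteDimensional_of_finite
  have hrank : Module.finrank L Ω = Fintype.card ι := Module.finrank_eq_card_basis b
  set E := algebraicClosure F L with hE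
  -- minimal polynomial descends
  have hγL : IsIntegral L γ := hγ.tower_top
  have hγE : IsIntegral E γ := hγ.tower_top
  obtain ⟨g, hg⟩ := integralClosure.mem_lifts_of_monic_of_dvd_map L (minpoly.monic hγ)
    (minpoly.monic hγL) (minpoly.dvd_map_of_isScalarTower F L γ)
  have hdeg : (minpoly E γ).natDegree ≤ Fintype.card ι := by
    have hg' : g.map (algebraMap (integralClosure F L) L) = minpoly L γ := hg
    let g2 : E[X] := g.map (Subalgebra.inclusion (S := integralClosure F L) (T := E.toSubalgebra) (fun x hx => hx)).toRingHom
    have hg2 : g2.map (algebraMap E L) = minpoly L γ := by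
      rw [← hg', Polynomial.map_map]; rfl
    have hm2 : g2.Monic := by
      have := minpoly.monic hγL
      rw [← hg2] at this
      exact Polynomial.monic_of_injective (algebraMap E L).injective this
    have hroot : aeval γ g2 = 0 := by
      rw [← aeval_map_algebraMap L, hg2, minpoly.aeval]
    calc _ ≤ g2.natDegree := natDegree_le_of_dvd (minpoly.dvd E γ hroot) hm2.ne_zero
      _ = (minpoly L γ).natDegree := by rw [← hg2]; exact (natDegree_map (algebraMap E L)).symm
      _ ≤ _ := by rw [← hrank]; exact minpoly.natDegree_le γ
  have h1 : Module.finrank E E⟮γ⟯ ≤ Fintype.card ι := by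
    rw [adjoin.finrank hγE]; exact hdeg
  have : FiniteDimensional E E⟮γ⟯ := adjoin.finiteDimensional hγE
  have hFE : ∀ x ∈ F⟮γ⟯, x ∈ E⟮γ⟯ := by
    have : F⟮γ⟯ ≤ (E⟮γ⟯).restrictScalars F := by
      rw [adjoin_simple_le_iff]; exact mem_adjoin_simple_self E γ
    exact fun x hx => this hx
  let e' : ι → E⟮γ⟯ := fun i => ⟨e i, hFE _ (heγ i)⟩
  have hli' : LinearIndependent E e' := by
    have h2 : LinearIndependent E e := hli.restrict_scalars' E
    exact LinearIndependent.of_comp E⟮γ⟯.val.toLinearMap h2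
  have hspan : Submodule.span E (Set.range e') = ⊤ :=
    hli'.span_eq_top_of_card_eq_finrank' (le_antisymm hli'.fintype_card_le_finrank h1)
  have hmem : (⟨_, hFE _ hy⟩ : E⟮γ⟯) ∈ Submodule.span E (Set.range e') := by
    rw [hspan]; trivial
  obtain ⟨c, hc⟩ := (Submodule.mem_span_range_iff_exists_fun E).1 hmem
  have hc' : ∑ i, ((c i : L) : L) • e i = ∑ i, Y i • e i := by
    have := congrArg E⟮γ⟯.val hc
    rw [map_sum] at this
    simp only [map_smul] at this
    exact this
  have : (c i : L) = Y i := by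
    have := Fintype.linearIndependent_iff.1 hli (fun i => (c i : L) - Y i)
      (by simp [sub_smul, hc']) i
    exact sub_eq_zero.1 this
  rw [← this]
  have h3 : IsAlgebraic F (c i : L) := (mem_algebraicClosure_iff).1 (c i).2
  exact h3.algebraMap

end PartA

section PartB
open Polynomial
section Christol

theorem alg_iff_field (K L : Type*) [Field K] [Field L] [Algebra K L] (p : ℕ) (hp : 2 ≤ p) (x : L) :
    IsAlgebraic K x ↔ ¬ LinearIndependent K (fun i : ℕ => x ^ p ^ i) := by
  constructor
  · intro h hli
    have hfd : FiniteDimensional K (IntermediateField.adjoin K {x}) :=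
      IntermediateField.adjoin.finiteDimensional h.isIntegral
    let f : ℕ → IntermediateField.adjoin K {x} := fun i =>
      ⟨x ^ p ^ i, pow_mem (IntermediateField.mem_adjoin_simple_self K x) _⟩
    have hf : LinearIndependent K f :=
      LinearIndependent.of_comp (IntermediateField.adjoin K {x}).val.toLinearMap hli
    have := hf.finite
    exact not_finite ℕ
  · intro h
    by_contra hx
    apply h
    have h1 : LinearIndependent K (fun i : ℕ => x ^ i) := by
      have hinj := transcendental_iff_injective.1 hx
      have h2 := (Polynomial.basisMonomials K).linearIndependent.map' (aeval x).toLinearMap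
        (LinearMap.ker_eq_bot.2 hinj)
      have h3 : (fun i : ℕ => x ^ i) = ⇑(aeval x).toLinearMap ∘ ⇑(basisMonomials K) := by
        ext i; simp
      rw [h3]; exact h2
    exact h1.comp (fun i => p ^ i) (Nat.pow_right_injective hp)

theorem alg_of_frob (K L : Type*) [Field K] [Field L] [Algebra K L] (p : ℕ) [Fact p.Prime]
    [CharP L p] (T : Set L) (hT : T.Finite)
    (h : ∀ x ∈ T, x ∈ Submodule.span K ((fun y => y ^ p) '' T)) (x : L) (hx : x ∈ T) :
    IsAlgebraic K x := by
  have hp : 2 ≤ p := (Fact.out : p.Prime).two_le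
  set W := Submodule.span K T with hW
  have hWf : FiniteDimensional K W := FiniteDimensional.span_of_finite K hT
  obtain ⟨B, hBT, hBspan, hBli⟩ := exists_linearIndependent K T
  have hBf : B.Finite := hT.subset hBT
  have hsub : ∀ w ∈ W, w ^ p ∈ Submodule.span K ((fun y => y ^ p) '' B) := by
    intro w hw
    rw [hW, ← hBspan] at hw
    induction hw using Submodule.span_induction with
    | mem y hy => exact Submodule.subset_span ⟨y, hy, rfl⟩
    | zero => simp [Nat.ne_of_gt (by omega : 0 < p)]
    | add y z _ _ hy hz => rw [add_pow_char]; exact Submodule.add_mem _ hy hz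
    | smul a y _ hy => rw [_root_.smul_pow]; exact Submodule.smul_mem _ _ hy
  have hle : W ≤ Submodule.span K ((fun y => y ^ p) '' B) := by
    rw [hW, Submodule.span_le]
    intro y hy
    refine (Submodule.span_le.2 ?_) (h y hy)
    rintro _ ⟨z, hz, rfl⟩
    exact hsub z (Submodule.subset_span hz)
  have hfd2 : FiniteDimensional K (Submodule.span K ((fun y : L => y ^ p) '' B)) :=
    FiniteDimensional.span_of_finite K (hBf.image _)
  have hfr : Module.finrank K (Submodule.span K ((fun y : L => y ^ p) '' B)) ≤ Module.finrank K W := by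
    have h1 : Module.finrank K W = B.ncard := by
      rw [hW, ← hBspan]
      have := hBf.fintype
      rw [finrank_span_set_eq_card hBli, Set.ncard_eq_toFinset_card']
    rw [h1]
    have := (hBf.image (fun y : L => y ^ p)).fintype
    calc _ ≤ ((fun y : L => y ^ p) '' B).toFinset.card := finrank_span_le_card _
      _ = ((fun y : L => y ^ p) '' B).ncard := by rw [Set.ncard_eq_toFinset_card']
      _ ≤ _ := Set.ncard_image_le hBf
  have heq := Submodule.eq_of_le_of_finrank_le hle hfr
  have hcl : ∀ w ∈ W, w ^ p ∈ W := fun w hw => by rw [heq]; exact hsub w hw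
  rw [alg_iff_field K L p hp]
  intro hli
  have hmem : ∀ i : ℕ, x ^ p ^ i ∈ W := by
    intro i
    induction i with
    | zero => simpa using Submodule.subset_span hx
    | succ n ih => rw [pow_succ, pow_mul]; exact hcl _ ih
  have hf : LinearIndependent K (fun i : ℕ => (⟨x ^ p ^ i, hmem i⟩ : W)) :=
    LinearIndependent.of_comp W.subtype hli
  have := hf.finite
  exact not_finite ℕ

variable (p : ℕ) [Fact p.Prime]

local notation "RR" => PowerSeries (ZMod p)

/-- Cartier operator -/
noncomputable def Lam (j : ℕ) : PowerSeries (ZMod p) →+ PowerSeries (ZMod p) where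
  toFun f := PowerSeries.mk fun n => PowerSeries.coeff (n * p + j) f
  map_zero' := by ext; simp
  map_add' f g := by ext; simp

theorem coeff_Lam (j n : ℕ) (f : RR) :
    PowerSeries.coeff n (Lam p j f) = PowerSeries.coeff (n * p + j) f := by
  simp [Lam]

theorem coeff_pow_p (f : RR) (n : ℕ) :
    PowerSeries.coeff n (f ^ p) = if p ∣ n then PowerSeries.coeff (n / p) f else 0 := by
  have hp : p ≠ 0 := (Fact.out : p.Prime).ne_zero
  have h := MvPowerSeries.map_frobenius_expand (R := ZMod p) p (f := f) hp
  rw [ZMod.frobenius_zmod] at h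
  have h2 : f.expand p hp = f ^ p := by
    rw [← h]; ext n; simp [PowerSeries.expand]
  rw [← h2, PowerSeries.coeff_expand]

theorem decomp (f : RR) : f = ∑ j ∈ Finset.range p, PowerSeries.X ^ j * (Lam p j f) ^ p := by
  ext n
  have hp : 0 < p := (Fact.out : p.Prime).pos
  rw [map_sum, Finset.sum_eq_single (n % p)]
  · rw [PowerSeries.coeff_X_pow_mul', if_pos (Nat.mod_le n p), coeff_pow_p, if_pos (Nat.dvd_sub_mod n),
      coeff_Lam]
    congr 2
    rw [Nat.div_mul_cancel (Nat.dvd_sub_mod n)]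
    have := Nat.mod_le n p
    omega
  · intro j hj hjn
    rw [PowerSeries.coeff_X_pow_mul']
    split_ifs with h
    · rw [coeff_pow_p, if_neg]
      intro hd
      apply hjn
      have h1 : j ≡ n [MOD p] := (Nat.modEq_iff_dvd' h).2 hd
      rw [← h1]; exact (Nat.mod_eq_of_lt (Finset.mem_range.1 hj)).symm
    · rfl
  · intro h; exact absurd (Finset.mem_range.2 (Nat.mod_lt n hp)) h

theorem Lam_sum (h : ℕ → RR) (i : ℕ) (hi : i < p) :
    Lam p i (∑ j ∈ Finset.range p, PowerSeries.X ^ j * (h j) ^ p) = h i := by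
  have hp : 0 < p := (Fact.out : p.Prime).pos
  ext n
  rw [coeff_Lam, map_sum, Finset.sum_eq_single i]
  · rw [PowerSeries.coeff_X_pow_mul', if_pos (by omega), coeff_pow_p, Nat.add_sub_cancel,
      if_pos (Nat.dvd_mul_left p n), Nat.mul_div_cancel _ hp]
  · intro j hj hjn
    rw [PowerSeries.coeff_X_pow_mul']
    split_ifs with h
    · rw [coeff_pow_p, if_neg]
      intro hd
      apply hjn
      have h1 : j ≡ n * p + i [MOD p] := (Nat.modEq_iff_dvd' h).2 hd
      have h2 : j ≡ i [MOD p] := by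
        refine h1.trans ?_
        simp [Nat.ModEq]
      have := Nat.ModEq.eq_of_lt_of_lt h2 (Finset.mem_range.1 hj) hi
      exact this
    · rfl
  · intro h; exact absurd (Finset.mem_range.2 hi) h

theorem Lam_mul_pow (f g : RR) (i : ℕ) (hi : i < p) : Lam p i (f * g ^ p) = Lam p i f * g := by
  conv_lhs => rw [decomp p f, Finset.sum_mul]
  have : ∑ j ∈ Finset.range p, PowerSeries.X ^ j * Lam p j f ^ p * g ^ p =
      ∑ j ∈ Finset.range p, PowerSeries.X ^ j * (Lam p j f * g) ^ p :=
    Finset.sum_congr rfl fun j _ => by ring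
  rw [this, Lam_sum p (fun j => Lam p j f * g) i hi]

/-- polynomial of degree `< N` -/
def Bdd (N : ℕ) (f : RR) : Prop := ∀ n, N ≤ n → PowerSeries.coeff n f = 0

theorem Bdd.mono {N M : ℕ} {f : RR} (h : Bdd p N f) (hNM : N ≤ M) : Bdd p M f :=
  fun n hn => h n (hNM.trans hn)

theorem Bdd.mul {N M : ℕ} {f g : RR} (hf : Bdd p N f) (hg : Bdd p M g) : Bdd p (N + M) (f * g) := by
  intro n hn
  rw [PowerSeries.coeff_mul]
  refine Finset.sum_eq_zero fun x hx => ?_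
  have hx := Finset.HasAntidiagonal.mem_antidiagonal.1 hx
  by_cases h : N ≤ x.1
  · rw [hf _ h, zero_mul]
  · rw [hg _ (by omega), mul_zero]

theorem Bdd.sum {ι : Type*} {N : ℕ} (s : Finset ι) (f : ι → RR) (hf : ∀ i ∈ s, Bdd p N (f i)) :
    Bdd p N (∑ i ∈ s, f i) := by
  intro n hn
  rw [map_sum]
  exact Finset.sum_eq_zero fun i hi => hf i hi n hn

theorem Bdd.lam {N M : ℕ} {f : RR} (hf : Bdd p M f) (h : M ≤ N * p) (j : ℕ) : Bdd p N (Lam p j f) := by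
  intro n hn
  rw [coeff_Lam]
  exact hf _ (by nlinarith)

theorem finite_bdd (N : ℕ) : {f : RR | Bdd p N f}.Finite := by
  refine Set.Finite.of_injOn (f := fun f : RR => fun i : Fin N => PowerSeries.coeff (i : ℕ) f)
    (t := Set.univ) (fun _ _ => trivial) ?_ Set.finite_univ
  intro f hf g hg hfg
  ext n
  by_cases h : n < N
  · exact congrFun hfg ⟨n, h⟩
  · rw [hf n (by omega), hg n (by omega)]

theorem auto_of_closed (T : Set RR) (hT : T.Finite) (hcl : ∀ f ∈ T, ∀ j < p, Lam p j f ∈ T)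
    (f : RR) (hf : f ∈ T) : IsKAutomatic p (fun n => PowerSeries.coeff n f) := by
  refine (hT.image (fun g : RR => fun n => PowerSeries.coeff n g)).subset ?_
  rintro c ⟨i, j, hij, rfl⟩
  induction i generalizing j with
  | zero => exact ⟨f, hf, by ext n; simp at hij; simp [hij]⟩
  | succ i ih =>
    have hpi : 0 < p ^ i := pow_pos (Fact.out : p.Prime).pos _
    obtain ⟨g, hg, hgc⟩ := ih (j % p ^ i) (Nat.mod_lt _ hpi)
    have hlt : j / p ^ i < p := by
      rw [Nat.div_lt_iff_lt_mul hpi]; rwa [pow_succ, mul_comm] at hij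
    refine ⟨Lam p (j / p ^ i) g, hcl g hg _ hlt, ?_⟩
    ext n
    simp only [coeff_Lam]
    have := congrFun hgc (n * p + j / p ^ i)
    simp only at this
    rw [this]
    congr 2
    have h2 := Nat.div_add_mod j (p ^ i)
    rw [pow_succ]
    nlinarith

theorem closed_of_auto (f : RR) (h : IsKAutomatic p (fun n => PowerSeries.coeff n f)) :
    ∃ T : Set RR, T.Finite ∧ (∀ f ∈ T, ∀ j < p, Lam p j f ∈ T) ∧ f ∈ T := by
  refine ⟨PowerSeries.mk '' _, h.image _, ?_, ?_⟩
  · rintro _ ⟨c, ⟨i, j, hij, rfl⟩, rfl⟩ l hl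
    refine ⟨_, ⟨i + 1, j + l * p ^ i, ?_, rfl⟩, ?_⟩
    · rw [pow_succ]; nlinarith
    · ext n
      simp only [coeff_Lam, PowerSeries.coeff_mk]
      congr 2
      rw [pow_succ]; ring
  · exact ⟨_, ⟨0, 0, by simp, rfl⟩, by ext n; simp⟩

theorem auto_of_system {ι : Type*} [Fintype ι] (D : ι → RR) (δ : RR) (hδ : δ ≠ 0) (B : ι → ι → RR)
    (NB : ℕ) (hB : ∀ i l, Bdd p NB (B i l))
    (hD : ∀ i, δ ^ (p - 1) * D i = ∑ l, B i l * D l ^ p) (h : RR) (c : ι → RR) (N0 : ℕ)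
    (hc : ∀ i, Bdd p N0 (c i)) (hh : δ * h = ∑ i, c i * D i) :
    IsKAutomatic p (fun n => PowerSeries.coeff n h) := by
  have hp : 2 ≤ p := (Fact.out : p.Prime).two_le
  set N := max NB N0
  let T : Set RR := {g | ∃ c : ι → RR, (∀ i, Bdd p N (c i)) ∧ δ * g = ∑ i, c i * D i}
  refine auto_of_closed p T ?_ ?_ h ⟨c, fun i => (hc i).mono p (le_max_right _ _), hh⟩
  · have hfin : {c : ι → RR | ∀ i, Bdd p N (c i)}.Finite := by
      have := Set.Finite.pi' (fun _ : ι => finite_bdd p N)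
      exact this
    choose! cf hcf1 hcf2 using (fun g (hg : g ∈ T) => hg)
    refine Set.Finite.of_injOn (f := cf) (t := {c : ι → RR | ∀ i, Bdd p N (c i)}) (fun g hg => hcf1 g hg) ?_ hfin
    intro f hf g hg hfg
    have := hcf2 f hf
    rw [hfg, ← hcf2 g hg] at this
    exact mul_left_cancel₀ hδ this
  · rintro g ⟨c, hc, hg⟩ j hj
    refine ⟨fun l => Lam p j (∑ i, c i * B i l), fun l => ?_, ?_⟩
    · refine Bdd.lam p (M := N + NB) (Bdd.sum p _ _ fun i _ => (hc i).mul p (hB i l)) ?_ j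
      have : NB ≤ N := le_max_left _ _
      nlinarith
    · have h1 : g * δ ^ p = ∑ l, (∑ i, c i * B i l) * D l ^ p := by
        calc g * δ ^ p = δ ^ (p - 1) * (δ * g) := by
              rw [← pow_sub_one_mul (by omega : p ≠ 0) δ]; ring
          _ = ∑ i, c i * (δ ^ (p - 1) * D i) := by
              rw [hg, Finset.mul_sum]; exact Finset.sum_congr rfl fun i _ => by ring
          _ = ∑ i, ∑ l, c i * B i l * D l ^ p := by
              refine Finset.sum_congr rfl fun i _ => ?_
              rw [hD, Finset.mul_sum]; exact Finset.sum_congr rfl fun i _ => by ring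
          _ = _ := by
              rw [Finset.sum_comm]
              refine Finset.sum_congr rfl fun i _ => ?_
              rw [Finset.sum_mul]
      have h2 := congrArg (Lam p j) h1
      rw [Lam_mul_pow p _ _ _ hj, map_sum] at h2
      rw [mul_comm, h2]
      exact Finset.sum_congr rfl fun l _ => Lam_mul_pow p _ _ _ hj

theorem bdd_poly (f : (ZMod p)[X]) : Bdd p (f.natDegree + 1) (f : RR) := by
  intro n hn
  rw [Polynomial.coeff_coe]
  exact Polynomial.coeff_eq_zero_of_natDegree_lt (by omega)

theorem bdd_one : Bdd p 1 (1 : RR) := by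
  intro n hn
  rw [PowerSeries.coeff_one, if_neg (by omega)]

theorem bdd_zero : Bdd p 1 (0 : RR) := by
  intro n hn; simp

theorem Bdd.neg {N : ℕ} {f : RR} (hf : Bdd p N f) : Bdd p N (-f) := by
  intro n hn; rw [map_neg, hf n hn, neg_zero]

theorem Bdd.pow {N : ℕ} {f : RR} (hf : Bdd p N f) (k : ℕ) : ∃ M, Bdd p M (f ^ k) := by
  induction k with
  | zero => exact ⟨1, by rw [pow_zero]; exact bdd_one p⟩
  | succ k ih => obtain ⟨M, hM⟩ := ih; exact ⟨M + N, by rw [pow_succ]; exact hM.mul p hf⟩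

theorem bdd_unif {ι : Type*} [Fintype ι] (f : ι → RR) (h : ∀ i, ∃ N, Bdd p N (f i)) :
    ∃ N, ∀ i, Bdd p N (f i) := by
  choose N hN using h
  exact ⟨Finset.univ.sup N, fun i => (hN i).mono p (Finset.le_sup (Finset.mem_univ i))⟩

theorem ore_rel (G : RR) (h : IsAlgebraic (ZMod p)[X] G) : ∃ (d : ℕ) (c : ℕ → RR),
    (∀ i, ∃ N, Bdd p N (c i)) ∧ ∑ i ∈ Finset.range d, c i * G ^ p ^ i = 0 ∧ ∃ i < d, c i ≠ 0 := by
  have hp : 2 ≤ p := (Fact.out : p.Prime).two_le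
  let KL := FractionRing RR
  let KF := FractionRing (ZMod p)[X]
  have hfs : FaithfulSMul (ZMod p)[X] KL := by
    rw [faithfulSMul_iff_algebraMap_injective, IsScalarTower.algebraMap_eq (ZMod p)[X] RR KL]
    refine (IsFractionRing.injective RR KL).comp ?_
    intro a b hab
    simpa [PowerSeries.algebraMap_apply'] using hab
  let _ : Algebra KF KL := FractionRing.liftAlgebra (ZMod p)[X] KL
  have : IsScalarTower (ZMod p)[X] KF KL := FractionRing.isScalarTower_liftAlgebra _ _
  have h1 : IsAlgebraic (ZMod p)[X] (algebraMap RR KL G) := h.algebraMap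
  have h2 : IsAlgebraic KF (algebraMap RR KL G) :=
    (IsFractionRing.isAlgebraic_iff (ZMod p)[X] KF KL).1 h1
  rw [alg_iff_field KF KL p hp, ← LinearIndependent.iff_fractionRing (ZMod p)[X] KF] at h2
  have h3 : ¬ LinearIndependent (ZMod p)[X] (fun i : ℕ => G ^ p ^ i) := by
    intro h4
    apply h2
    have := h4.map' (IsScalarTower.toAlgHom (ZMod p)[X] RR KL).toLinearMap
      (LinearMap.ker_eq_bot.2 (IsFractionRing.injective RR KL))
    have h5 : (fun i : ℕ => (algebraMap RR KL G) ^ p ^ i) =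
      (IsScalarTower.toAlgHom (ZMod p)[X] RR KL).toLinearMap ∘ (fun i : ℕ => G ^ p ^ i) := by
      ext i; simp
    rw [h5]; exact this
  rw [linearIndependent_iff'] at h3
  push Not at h3
  obtain ⟨s, g, hg, i, his, hi⟩ := h3
  classical
  refine ⟨s.sup id + 1, fun i => if i ∈ s then ((g i : (ZMod p)[X]) : RR) else 0, ?_, ?_, i, ?_, ?_⟩
  · intro i
    dsimp only
    split_ifs
    · exact ⟨_, bdd_poly p _⟩
    · exact ⟨_, bdd_zero p⟩
  · refine Eq.trans (Eq.symm ?_) hg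
    apply Finset.sum_subset_zero_on_sdiff
    · intro j hj; rw [Finset.mem_range]; exact Nat.lt_succ_of_le (Finset.le_sup (f := id) hj)
    · intro j hj; rw [Finset.mem_sdiff] at hj; simp [hj.2]
    · intro j hj; simp [hj, Algebra.smul_def, PowerSeries.algebraMap_apply']
  · exact Nat.lt_succ_of_le (Finset.le_sup (f := id) his)
  · simp [his, hi]

theorem ore_rel' (G : RR) (h : IsAlgebraic (ZMod p)[X] G) : ∃ (e : ℕ) (c : ℕ → RR),
    (∀ i, ∃ N, Bdd p N (c i)) ∧ ∑ i ∈ Finset.range (e + 1), c i * G ^ p ^ i = 0 ∧ c 0 ≠ 0 := by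
  classical
  have hp : 2 ≤ p := (Fact.out : p.Prime).two_le
  have hex := ore_rel p G h
  obtain ⟨c, hc1, hc2, i, hid, hi⟩ := Nat.find_spec hex
  obtain ⟨e, he⟩ : ∃ e, Nat.find hex = e + 1 := ⟨Nat.find hex - 1, by omega⟩
  rw [he] at hc2 hid
  refine ⟨e, c, hc1, hc2, fun h0 => ?_⟩
  obtain ⟨i', rfl⟩ : ∃ i', i = i' + 1 := by
    refine ⟨i - 1, ?_⟩
    have : i ≠ 0 := fun h => hi (h ▸ h0)
    omega
  obtain ⟨j, hj, hji⟩ : ∃ j < p, Lam p j (c (i' + 1)) ≠ 0 := by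
    by_contra hcon
    push Not at hcon
    apply hi
    rw [decomp p (c (i' + 1))]
    refine Finset.sum_eq_zero fun j hj => ?_
    rw [hcon j (Finset.mem_range.1 hj), zero_pow (by omega), mul_zero]
  refine Nat.find_min hex (m := e) (by omega) ⟨fun i => Lam p j (c (i + 1)), ?_, ?_, i', by omega, hji⟩
  · intro i
    obtain ⟨N, hN⟩ := hc1 (i + 1)
    exact ⟨N, hN.lam p (by nlinarith) j⟩
  · rw [Finset.sum_range_succ', h0, zero_mul, add_zero] at hc2
    have h2 := congrArg (Lam p j) hc2
    rw [map_sum, map_zero] at h2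
    rw [← h2]
    refine Finset.sum_congr rfl fun i _ => ?_
    rw [pow_succ p i, pow_mul, Lam_mul_pow p _ _ _ hj]

theorem auto_of_alg (G : RR) (h : IsAlgebraic (ZMod p)[X] G) :
    IsKAutomatic p (fun n => PowerSeries.coeff n G) := by
  have hp : 2 ≤ p := (Fact.out : p.Prime).two_le
  obtain ⟨e, c, hc, hrel, h0⟩ := ore_rel' p G h
  set Δ := c 0 with hΔ
  let D : Fin (e + 1) → RR := fun i => Δ ^ (p ^ e - p ^ (i : ℕ)) * G ^ p ^ (i : ℕ)
  let B : Fin (e + 1) → Fin (e + 1) → RR := fun i l =>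
    if (i : ℕ) = 0 then (if (l : ℕ) < e then -(c (l + 1) * Δ ^ (p ^ ((l : ℕ) + 1) - 2)) else 0)
    else if (l : ℕ) + 1 = i then 1 else 0
  have hBb : ∃ NB, ∀ il : Fin (e + 1) × Fin (e + 1), Bdd p NB (B il.1 il.2) := by
    apply bdd_unif
    rintro ⟨i, l⟩
    dsimp only [B]
    split_ifs
    · obtain ⟨N, hN⟩ := hc (l + 1)
      obtain ⟨N0, hN0⟩ := hc 0
      obtain ⟨M, hM⟩ := hN0.pow p (p ^ ((l : ℕ) + 1) - 2)
      exact ⟨_, (hN.mul p hM).neg p⟩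
    · exact ⟨_, bdd_zero p⟩
    · exact ⟨_, bdd_one p⟩
    · exact ⟨_, bdd_zero p⟩
  obtain ⟨NB, hNB⟩ := hBb
  obtain ⟨N0, hN0⟩ := hc 0
  have hle : ∀ i ≤ e, p ^ i ≤ p ^ e := fun i hi => Nat.pow_le_pow_right (by omega) hi
  have hDp : ∀ l : Fin (e + 1), D l ^ p = Δ ^ (p ^ (e + 1) - p ^ ((l : ℕ) + 1)) * G ^ p ^ ((l : ℕ) + 1) := by
    intro l
    dsimp only [D]
    rw [mul_pow, ← pow_mul, ← pow_mul, Nat.sub_mul, pow_succ, pow_succ]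
  have hpe : p ^ e * (p - 1) = p ^ (e + 1) - p ^ e := by rw [Nat.mul_sub, pow_succ, mul_one]
  have hpe' : p ^ e ≤ p ^ (e + 1) := Nat.pow_le_pow_right (by omega) (by omega)
  refine auto_of_system p D (Δ ^ p ^ e) (pow_ne_zero _ h0) B NB (fun i l => hNB (i, l)) ?_ G
    (fun i => if (i : ℕ) = 0 then Δ else 0) (N0 + 1) ?_ ?_
  · intro i
    by_cases hi : (i : ℕ) = 0
    · have h1 : 1 ≤ p ^ e := Nat.one_le_pow _ _ (by omega)
      have h2 : 2 ≤ p ^ (e + 1) := hp.trans (by rw [pow_succ]; nlinarith)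
      have hl : (Δ ^ p ^ e) ^ (p - 1) * D i = Δ ^ (p ^ (e + 1) - 2) * (Δ * G) := by
        dsimp only [D]
        rw [hi, pow_zero, pow_one, ← pow_mul, hpe, ← mul_assoc, ← pow_add, ← mul_assoc, ← pow_succ]
        congr 2
        omega
      have hG : Δ * G = - ∑ l ∈ Finset.range e, c (l + 1) * G ^ p ^ (l + 1) := by
        rw [Finset.sum_range_succ'] at hrel
        rw [pow_zero, pow_one] at hrel
        rw [← hΔ] at hrel
        exact eq_neg_of_add_eq_zero_right hrel
      rw [hl, hG, Fin.sum_univ_castSucc, Finset.sum_range, mul_neg, Finset.mul_sum,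
        ← Finset.sum_neg_distrib]
      have hz : B i (Fin.last e) = 0 := by simp [B, hi]
      rw [hz, zero_mul, add_zero]
      refine Finset.sum_congr rfl fun l _ => ?_
      rw [hDp]
      have h3 : p ^ ((l : ℕ) + 1) ≤ p ^ (e + 1) := Nat.pow_le_pow_right (by omega) (by omega)
      have h4 : 2 ≤ p ^ ((l : ℕ) + 1) := hp.trans (by
        have : 1 ≤ p ^ (l : ℕ) := Nat.one_le_pow _ _ (by omega)
        rw [pow_succ]; nlinarith)
      have h5 : Δ ^ (p ^ (e + 1) - 2) =
          Δ ^ (p ^ ((l : ℕ) + 1) - 2) * Δ ^ (p ^ (e + 1) - p ^ ((l : ℕ) + 1)) := by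
        rw [← pow_add]; congr 1; omega
      simp only [B, hi, Fin.val_castSucc, l.2, if_true]
      rw [h5]; ring
    · obtain ⟨j, hj⟩ : ∃ j : ℕ, (i : ℕ) = j + 1 := ⟨i - 1, by omega⟩
      have hi2 := i.2
      rw [Finset.sum_eq_single (⟨j, by omega⟩ : Fin (e + 1))]
      · rw [hDp]
        simp only [B, hi, hj, if_false, if_true, one_mul]
        dsimp only [D]
        have := hle (j + 1) (by omega)
        rw [hj, ← pow_mul, hpe, ← mul_assoc, ← pow_add]
        simp
        left
        congr 1
        omega
      · intro l _ hl
        have : (l : ℕ) + 1 ≠ i := fun h => hl (Fin.ext (by simp; omega))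
        simp only [B, if_neg hi, if_neg this, zero_mul]
      · intro h; exact absurd (Finset.mem_univ _) h
  · intro i
    split_ifs
    · exact hN0.mono p (by omega)
    · exact (bdd_zero p).mono p (by omega)
  · rw [Finset.sum_eq_single (0 : Fin (e + 1))]
    · have h1 : 1 ≤ p ^ e := Nat.one_le_pow _ _ (by omega)
      simp [D]
      rw [← mul_assoc, ← pow_succ']
      congr 2; omega
    · intro l _ hl
      have : (l : ℕ) ≠ 0 := fun h => hl (Fin.ext h)
      simp [this]
    · intro h; exact absurd (Finset.mem_univ _) h

theorem alg_of_auto (G : RR) (h : IsKAutomatic p (fun n => PowerSeries.coeff n G)) :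
    IsAlgebraic (ZMod p)[X] G := by
  have hp : 2 ≤ p := (Fact.out : p.Prime).two_le
  let KL := FractionRing RR
  let KF := FractionRing (ZMod p)[X]
  have hfs : FaithfulSMul (ZMod p)[X] KL := by
    rw [faithfulSMul_iff_algebraMap_injective, IsScalarTower.algebraMap_eq (ZMod p)[X] RR KL]
    refine (IsFractionRing.injective RR KL).comp ?_
    intro a b hab
    simpa [PowerSeries.algebraMap_apply'] using hab
  let _ : Algebra KF KL := FractionRing.liftAlgebra (ZMod p)[X] KL
  have : IsScalarTower (ZMod p)[X] KF KL := FractionRing.isScalarTower_liftAlgebra _ _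
  obtain ⟨T, hT, hcl, hG⟩ := closed_of_auto p G h
  have : CharP KL p := by
    have : CharP RR p := charP_of_injective_ringHom (f := (PowerSeries.C : ZMod p →+* RR))
      (PowerSeries.C_injective) p
    exact charP_of_injective_ringHom (f := algebraMap RR KL) (IsFractionRing.injective RR KL) p
  have h1 : IsAlgebraic KF (algebraMap RR KL G) := by
    refine alg_of_frob KF KL p (algebraMap RR KL '' T) (hT.image _) ?_ _ ⟨G, hG, rfl⟩
    rintro _ ⟨f, hf, rfl⟩
    rw [decomp p f, map_sum]
    refine Submodule.sum_mem _ fun j hj => ?_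
    have h2 : algebraMap RR KL (PowerSeries.X ^ j * Lam p j f ^ p) =
        (algebraMap (ZMod p)[X] KF (X ^ j)) • (algebraMap RR KL (Lam p j f)) ^ p := by
      rw [Algebra.smul_def, ← IsScalarTower.algebraMap_apply (ZMod p)[X] KF KL,
        IsScalarTower.algebraMap_apply (ZMod p)[X] RR KL, map_mul, map_pow, map_pow, map_pow, map_pow]
      congr 3
      simp [PowerSeries.algebraMap_apply']
    rw [h2]
    exact Submodule.smul_mem _ _ (Submodule.subset_span ⟨_, ⟨_, hcl f hf j (Finset.mem_range.1 hj), rfl⟩, rfl⟩)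
  rw [← IsFractionRing.isAlgebraic_iff (ZMod p)[X] KF KL] at h1
  exact (isAlgebraic_algebraMap_iff (IsFractionRing.injective RR KL)).1 h1

end Christol

end PartB

section PartC
open Filter Topology
section EvalSec
variable {Ω : Type*} [Field Ω] [Valued Ω ZM0] 

theorem nhds0 (π : Ω) (hπ0 : π ≠ 0) (hπ : Valued.v π < 1) (s : Set Ω) :
    s ∈ nhds (0 : Ω) ↔ ∃ n : ℕ, {x : Ω | Valued.v x ≤ Valued.v π ^ n} ⊆ s := by
  rw [Valued.is_topological_valuation]
  constructor
  · rintro ⟨γ, hγ⟩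
    have hne : MonoidWithZeroHom.ValueGroup₀.embedding γ.1 ≠ (0 : ZM0) := by
      simp
    obtain ⟨n, hn⟩ := exists_pow_lt₀ hπ (Units.mk0 _ hne)
    refine ⟨n, fun x hx => hγ ?_⟩
    rw [Set.mem_ofPred_eq, Valuation.restrict_lt_iff_lt_embedding]
    exact lt_of_le_of_lt hx hn
  · rintro ⟨n, hn⟩
    refine ⟨Units.mk0 (Valued.v.restrict (π ^ n)) (by simp [hπ0]), fun x hx => hn ?_⟩
    rw [Set.mem_ofPred_eq, Units.val_mk0, Valuation.restrict_lt_iff] at hx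
    rw [map_pow] at hx
    exact hx.le

theorem nonarch (π : Ω) (hπ0 : π ≠ 0) (hπ : Valued.v π < 1) : NonarchimedeanRing Ω where
  is_nonarchimedean U hU := by
    obtain ⟨n, hn⟩ := (nhds0 π hπ0 hπ U).1 hU
    let V : AddSubgroup Ω :=
      { carrier := {x : Ω | Valued.v x ≤ Valued.v π ^ n}
        zero_mem' := by simp
        add_mem' := fun {a b} ha hb => (Valued.v.map_add a b).trans (max_le ha hb)
        neg_mem' := fun {a} ha => by
          rw [Set.mem_ofPred_eq] at *; rwa [Valuation.map_neg] }
    refine ⟨⟨V, ?_⟩, hn⟩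
    refine AddSubgroup.isOpen_of_mem_nhds V (g := 0) ?_
    rw [nhds0 π hπ0 hπ]
    exact ⟨n, subset_rfl⟩

theorem summ [CompleteSpace Ω] (π : Ω) (hπ0 : π ≠ 0) (hπ : Valued.v π < 1) (a : ℕ → Ω)
    (ha : ∀ n, Valued.v (a n) ≤ 1) : Summable (fun n => a n * π ^ n) := by
  have := nonarch π hπ0 hπ
  refine NonarchimedeanAddGroup.summable_of_tendsto_cofinite_zero ?_
  rw [Nat.cofinite_eq_atTop]
  intro s hs
  obtain ⟨n, hn⟩ := (nhds0 π hπ0 hπ s).1 hs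
  rw [Filter.mem_map, Filter.mem_atTop_sets]
  refine ⟨n, fun m hm => hn ?_⟩
  rw [Set.mem_ofPred_eq, map_mul, map_pow]
  calc _ ≤ 1 * Valued.v π ^ n := mul_le_mul' (ha m) (pow_le_pow_right_of_le_one' hπ.le hm)
    _ = _ := one_mul _

theorem tsum_le [CompleteSpace Ω] (π : Ω) (hπ0 : π ≠ 0) (hπ : Valued.v π < 1) (a : ℕ → Ω)
    (ha : ∀ n, Valued.v (a n) ≤ 1) : Valued.v (∑' n, a n * π ^ n) ≤ 1 := by
  have h := (summ π hπ0 hπ a ha).hasSum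
  have hc := Valued.isClosed_integer Ω
  refine hc.mem_of_tendsto h (Filter.Eventually.of_forall fun s => ?_)
  refine Subring.sum_mem _ fun n _ => ?_
  change Valued.v (a n * π ^ n) ≤ (1 : ZM0)
  rw [map_mul, map_pow]
  exact mul_le_one' (ha n) (pow_le_one' hπ.le n)

theorem tsum_split [CompleteSpace Ω] (π : Ω) (hπ0 : π ≠ 0) (hπ : Valued.v π < 1) (a : ℕ → Ω)
    (ha : ∀ n, Valued.v (a n) ≤ 1) :
    ∑' n, a n * π ^ n = a 0 + π * ∑' n, a (n + 1) * π ^ n := by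
  rw [(summ π hπ0 hπ a ha).tsum_eq_zero_add, pow_zero, mul_one, ← tsum_mul_left]
  congr 1
  exact tsum_congr fun n => by ring

theorem ev_mul_aux [CompleteSpace Ω] (π : Ω) (hπ0 : π ≠ 0) (hπ : Valued.v π < 1) (a b : ℕ → Ω)
    (ha : ∀ n, Valued.v (a n) ≤ 1) (hb : ∀ n, Valued.v (b n) ≤ 1) :
    (∑' n, a n * π ^ n) * (∑' n, b n * π ^ n) =
      ∑' n, (∑ x ∈ Finset.HasAntidiagonal.antidiagonal n, a x.1 * b x.2) * π ^ n := by
  have hna := nonarch π hπ0 hπ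
  have hf := summ π hπ0 hπ a ha
  have hg := summ π hπ0 hπ b hb
  have hfg := Summable.mul_of_nonarchimedean hf hg
  have h := Summable.tsum_mul_tsum_eq_tsum_sum_antidiagonal hf hg hfg
  rw [h]
  refine tsum_congr fun n => ?_
  rw [Finset.sum_mul]
  refine Finset.sum_congr rfl fun x hx => ?_
  rw [← Finset.HasAntidiagonal.mem_antidiagonal.1 hx, pow_add]
  ring

variable (p : ℕ) [Fact p.Prime] [Algebra (ZMod p) Ω]

theorem val_zmod (c : ZMod p) : Valued.v (algebraMap (ZMod p) Ω c) ≤ 1 := by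
  have h : (algebraMap (ZMod p) Ω c) ^ p = algebraMap (ZMod p) Ω c := by
    rw [← map_pow, ZMod.pow_card]
  by_contra hlt
  push Not at hlt
  have hp : 1 < p := (Fact.out : p.Prime).one_lt
  have h2 := congrArg Valued.v h
  rw [map_pow] at h2
  have := pow_lt_pow_right₀ hlt hp
  rw [pow_one, h2] at this
  exact lt_irrefl _ this

/-- evaluation of power series -/
noncomputable def evHom [CompleteSpace Ω] (π : Ω) (hπ0 : π ≠ 0) (hπ : Valued.v π < 1) :
    PowerSeries (ZMod p) →+* Ω where
  toFun g := ∑' n, algebraMap (ZMod p) Ω (PowerSeries.coeff n g) * π ^ n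
  map_zero' := by simp
  map_one' := by
    rw [tsum_eq_single 0]
    · simp
    · intro n hn; simp [PowerSeries.coeff_one, hn]
  map_add' f g := by
    rw [← (summ π hπ0 hπ _ fun n => val_zmod p _).tsum_add (summ π hπ0 hπ _ fun n => val_zmod p _)]
    exact tsum_congr fun n => by rw [map_add, map_add, add_mul]
  map_mul' f g := by
    rw [ev_mul_aux π hπ0 hπ _ _ (fun n => val_zmod p (PowerSeries.coeff n f))
      (fun n => val_zmod p (PowerSeries.coeff n g))]
    refine tsum_congr fun n => ?_
    rw [PowerSeries.coeff_mul, map_sum]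
    simp only [map_mul]

theorem evHom_apply [CompleteSpace Ω] (π : Ω) (hπ0 : π ≠ 0) (hπ : Valued.v π < 1)
    (g : PowerSeries (ZMod p)) : evHom p π hπ0 hπ g =
      ∑' n, algebraMap (ZMod p) Ω (PowerSeries.coeff n g) * π ^ n := rfl

theorem evHom_le [CompleteSpace Ω] (π : Ω) (hπ0 : π ≠ 0) (hπ : Valued.v π < 1)
    (g : PowerSeries (ZMod p)) : Valued.v (evHom p π hπ0 hπ g) ≤ 1 :=
  tsum_le π hπ0 hπ _ fun n => val_zmod p _

theorem evHom_X [CompleteSpace Ω] (π : Ω) (hπ0 : π ≠ 0) (hπ : Valued.v π < 1) :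
    evHom p π hπ0 hπ PowerSeries.X = π := by
  rw [evHom_apply, tsum_eq_single 1]
  · simp
  · intro n hn; simp [PowerSeries.coeff_X, hn]

theorem evHom_C [CompleteSpace Ω] (π : Ω) (hπ0 : π ≠ 0) (hπ : Valued.v π < 1) (c : ZMod p) :
    evHom p π hπ0 hπ (PowerSeries.C c) = algebraMap (ZMod p) Ω c := by
  rw [evHom_apply, tsum_eq_single 0]
  · simp
  · intro n hn; simp [PowerSeries.coeff_C, hn]

theorem evHom_poly [CompleteSpace Ω] (π : Ω) (hπ0 : π ≠ 0) (hπ : Valued.v π < 1)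
    (f : Polynomial (ZMod p)) :
    evHom p π hπ0 hπ (f : PowerSeries (ZMod p)) = Polynomial.aeval π f := by
  induction f using Polynomial.induction_on' with
  | add f g hf hg => rw [Polynomial.coe_add, map_add, map_add, hf, hg]
  | monomial n a =>
    rw [← Polynomial.C_mul_X_pow_eq_monomial, Polynomial.coe_mul, Polynomial.coe_pow, Polynomial.coe_C,
      Polynomial.coe_X, map_mul, map_pow, evHom_X, evHom_C]
    simp

/-- reduction mod `π` -/
theorem evHom_split [CompleteSpace Ω] (π : Ω) (hπ0 : π ≠ 0) (hπ : Valued.v π < 1)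
    (g : PowerSeries (ZMod p)) : ∃ w, Valued.v w ≤ 1 ∧ evHom p π hπ0 hπ g =
      algebraMap (ZMod p) Ω (PowerSeries.constantCoeff g) + π * w := by
  refine ⟨∑' n, algebraMap (ZMod p) Ω (PowerSeries.coeff (n + 1) g) * π ^ n,
    tsum_le π hπ0 hπ _ fun n => val_zmod p _, ?_⟩
  rw [evHom_apply, tsum_split π hπ0 hπ (fun n => algebraMap (ZMod p) Ω (PowerSeries.coeff n g))
    fun n => val_zmod p _]
  simp

/-- independence over power series -/
theorem indep_ps [CompleteSpace Ω] (π : Ω) (hπ0 : π ≠ 0) (hπ : Valued.v π < 1) {ι : Type*} [Fintype ι]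
    (e : ι → Ω) (he1 : ∀ i, Valued.v (e i) ≤ 1)
    (he : ∀ c : ι → ZMod p, Valued.v (∑ i, algebraMap (ZMod p) Ω (c i) * e i) ≤ Valued.v π → c = 0)
    (g : ι → PowerSeries (ZMod p)) (h : ∑ i, evHom p π hπ0 hπ (g i) * e i = 0) : g = 0 := by
  have key : ∀ (N : ℕ) (g : ι → PowerSeries (ZMod p)), ∑ i, evHom p π hπ0 hπ (g i) * e i = 0 →
      ∀ i, PowerSeries.coeff N (g i) = 0 := by
    intro N
    have hstep : ∀ (g : ι → PowerSeries (ZMod p)), ∑ i, evHom p π hπ0 hπ (g i) * e i = 0 →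
        ∃ g' : ι → PowerSeries (ZMod p), (∀ i, g i = PowerSeries.X * g' i) ∧
          ∑ i, evHom p π hπ0 hπ (g' i) * e i = 0 := by
      intro g hg
      have h0 : (fun i => PowerSeries.constantCoeff (g i)) = 0 := by
        apply he
        choose w hw1 hw2 using fun i => evHom_split p π hπ0 hπ (g i)
        have : ∑ i, algebraMap (ZMod p) Ω (PowerSeries.constantCoeff (g i)) * e i =
            - (π * ∑ i, w i * e i) := by
          rw [eq_neg_iff_add_eq_zero, ← hg, Finset.mul_sum, ← Finset.sum_add_distrib]
          refine Finset.sum_congr rfl fun i _ => ?_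
          rw [hw2]; ring
        rw [this, Valuation.map_neg, map_mul]
        refine mul_le_of_le_one_right' ?_
        refine Valuation.map_sum_le _ fun i _ => ?_
        rw [map_mul]
        exact mul_le_one' (hw1 i) (he1 i)
      have hd : ∀ i, ∃ g', g i = PowerSeries.X * g' := fun i =>
        PowerSeries.X_dvd_iff.2 (congrFun h0 i)
      choose g' hg' using hd
      refine ⟨g', hg', ?_⟩
      have : π * ∑ i, evHom p π hπ0 hπ (g' i) * e i = 0 := by
        rw [← hg, Finset.mul_sum]
        refine Finset.sum_congr rfl fun i _ => ?_
        rw [hg' i, map_mul, evHom_X]; ring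
      exact (mul_eq_zero.1 this).resolve_left hπ0
    induction N with
    | zero =>
      intro g hg i
      obtain ⟨g', hg', _⟩ := hstep g hg
      rw [hg' i]; simp
    | succ N ih =>
      intro g hg i
      obtain ⟨g', hg', hg2⟩ := hstep g hg
      rw [hg' i, PowerSeries.coeff_succ_X_mul]
      exact ih g' hg2 i
  funext i
  ext N
  rw [key N g h i]; simp

theorem evHom_inj [CompleteSpace Ω] (π : Ω) (hπ0 : π ≠ 0) (hπ : Valued.v π < 1) :
    Function.Injective (evHom p π hπ0 hπ) := by
  rw [injective_iff_map_eq_zero]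
  intro g hg
  have := indep_ps p π hπ0 hπ (ι := Unit) (fun _ => 1) (by simp) (by
    intro c hc
    funext i
    by_contra hne
    simp at hc
    have h1 : Valued.v (algebraMap (ZMod p) Ω (c ()) * algebraMap (ZMod p) Ω (c ())⁻¹) = 1 := by
      rw [← map_mul, mul_inv_cancel₀ hne]; simp
    rw [map_mul] at h1
    have h2 := mul_lt_of_lt_of_le_one (lt_of_le_of_lt hc hπ) (val_zmod (Ω := Ω) p (c ())⁻¹)
    rw [h1] at h2
    exact lt_irrefl _ h2) (fun _ => g) (by simpa using hg)
  exact congrFun this ()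

end EvalSec

section AlgSec

theorem alg_mono {R S Ω : Type*} [Field R] [Field S] [Field Ω] [Algebra R Ω] [Algebra S Ω]
    (h : ∀ r : R, algebraMap R Ω r ∈ Set.range (algebraMap S Ω)) (x : Ω) (hx : IsAlgebraic R x) :
    IsAlgebraic S x := by
  obtain ⟨q, hq, hqx⟩ := hx
  have hl : q.map (algebraMap R Ω) ∈ Polynomial.lifts (algebraMap S Ω) := by
    rw [Polynomial.lifts_iff_coeff_lifts]
    intro n
    rw [Polynomial.coeff_map]
    exact h _
  rw [Polynomial.mem_lifts] at hl
  obtain ⟨r, hr⟩ := hl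
  refine ⟨r, ?_, ?_⟩
  · rintro rfl
    rw [Polynomial.map_zero] at hr
    exact hq ((Polynomial.map_eq_zero _).1 hr.symm)
  · rw [Polynomial.aeval_def, ← Polynomial.eval_map, hr, Polynomial.eval_map, ← Polynomial.aeval_def,
      hqx]

theorem alg_trans {R S Ω : Type*} [Field R] [Field S] [Field Ω] [Algebra R Ω] [Algebra S Ω]
    (h : ∀ r : R, IsAlgebraic S (algebraMap R Ω r)) (x : Ω) (hx : IsAlgebraic R x) :
    IsAlgebraic S x := by
  have h1 : IsAlgebraic (algebraicClosure S Ω) x :=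
    alg_mono (S := algebraicClosure S Ω) (fun r => ⟨⟨_, mem_algebraicClosure_iff.2 (h r)⟩, rfl⟩) x hx
  exact IsAlgebraic.restrictScalars S h1

open IntermediateField in
theorem K_finite {Ω : Type*} [Field Ω] (p : ℕ) [Fact p.Prime] [Algebra (ZMod p) Ω] (K : Subfield Ω)
    (x₀ : Ω) (hx₀ : x₀ ∈ K) (htr : Transcendental (⊥ : Subfield Ω) x₀)
    (hdeg : Module.rank (Subfield.closure {x₀}) (Submodule.span (Subfield.closure {x₀}) (K : Set Ω)) <
      Cardinal.aleph0)
    (π : Ω) (hπalg : IsAlgebraic K π) (hπtr : Transcendental (ZMod p) π) :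
    ∃ E : IntermediateField (ZMod p)⟮π⟯ Ω, FiniteDimensional (ZMod p)⟮π⟯ E ∧ ∀ x ∈ K, x ∈ E := by
  have hcl : Subfield.closure {x₀} ≤ K := Subfield.closure_le.2 (by simpa using hx₀)
  set F' := Subfield.closure {x₀} with hF'
  have hfin : Module.Finite F' (Submodule.span F' (K : Set Ω)) := Module.rank_lt_aleph0_iff.1 hdeg
  rw [Module.Finite.iff_fg] at hfin
  let SK : Subalgebra F' Ω :=
    { K.toSubring with
      algebraMap_mem' := fun r => hcl r.2 }
  have hSK : Subalgebra.toSubmodule SK = Submodule.span F' (K : Set Ω) := by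
    apply le_antisymm
    · intro x hx; exact Submodule.subset_span hx
    · rw [Submodule.span_le]; intro x hx; exact hx
  have hKalg : ∀ x ∈ K, IsAlgebraic F' x := fun x hx =>
    (IsIntegral.of_mem_of_fg SK (hSK ▸ hfin) x hx).isAlgebraic
  have hzK : ∀ (B : Subfield Ω) (c : ZMod p), algebraMap (ZMod p) Ω c ∈ B := by
    intro B c
    have : algebraMap (ZMod p) Ω c = ((c.val : ℕ) : Ω) := by
      rw [← map_natCast (algebraMap (ZMod p) Ω)]; simp
    rw [this]; exact natCast_mem _ _
  have hx0tr : Transcendental (ZMod p) x₀ := fun h => htr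
    (alg_mono (S := (⊥ : Subfield Ω)) (fun r => ⟨⟨_, hzK ⊥ r⟩, rfl⟩) x₀ h)
  have h1 : IsAlgebraic F' π := alg_trans (R := K) (fun r => hKalg r r.2) π hπalg
  have hle : F' ≤ ((ZMod p)⟮x₀⟯).toSubfield :=
    Subfield.closure_le.2 (by
      rw [Set.singleton_subset_iff]; exact mem_adjoin_simple_self (ZMod p) x₀)
  have h2 : IsAlgebraic (ZMod p)⟮x₀⟯ π :=
    alg_mono (R := F') (fun r => ⟨⟨_, hle r.2⟩, rfl⟩) π h1
  rw [isAlgebraic_adjoin_iff] at h2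
  have h3 := IsAlgebraic.adjoin_singleton hx0tr hπtr h2
  have h4 : IsAlgebraic (ZMod p)⟮π⟯ x₀ := isAlgebraic_adjoin_iff.2 h3
  have h5 : ∀ x ∈ F', IsAlgebraic (ZMod p)⟮π⟯ x := by
    have : F' ≤ (algebraicClosure (ZMod p)⟮π⟯ Ω).toSubfield :=
      Subfield.closure_le.2 (by simpa using mem_algebraicClosure_iff.2 h4)
    intro x hx
    exact mem_algebraicClosure_iff.1 (this hx)
  have h6 : ∀ x ∈ K, IsAlgebraic (ZMod p)⟮π⟯ x := fun x hx =>
    alg_trans (R := F') (fun r => h5 r r.2) x (hKalg x hx)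
  obtain ⟨S, hS⟩ := hfin
  have hSK' : ∀ s ∈ S, s ∈ K := fun s hs => by
    have : s ∈ Submodule.span F' (K : Set Ω) := hS ▸ Submodule.subset_span hs
    rw [← hSK] at this
    exact this
  have hfs : (insert x₀ (S : Set Ω)).Finite := S.finite_toSet.insert _
  have := hfs.to_subtype
  refine ⟨adjoin (ZMod p)⟮π⟯ (insert x₀ (S : Set Ω)), finiteDimensional_adjoin ?_, ?_⟩
  · rintro x (rfl | hx)
    · exact h4.isIntegral
    · exact (h6 x (hSK' x hx)).isIntegral
  · intro x hx
    have hx' : x ∈ Submodule.span F' (S : Set Ω) := hS ▸ Submodule.subset_span hx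
    have hFE : F' ≤ (adjoin (ZMod p)⟮π⟯ (insert x₀ (S : Set Ω))).toSubfield :=
      Subfield.closure_le.2 (by
        rw [Set.singleton_subset_iff]; exact subset_adjoin _ _ (Set.mem_insert _ _))
    induction hx' using Submodule.span_induction with
    | mem y hy => exact subset_adjoin _ _ (Set.mem_insert_of_mem _ hy)
    | zero => exact zero_mem _
    | add y z hy hz h1 h2 => 
      have hy' : y ∈ K := by rw [hS, ← hSK] at hy; exact hy
      have hz' : z ∈ K := by rw [hS, ← hSK] at hz; exact hz
      exact add_mem (h1 hy') (h2 hz')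
    | smul a y hy h1 =>
      have hy' : y ∈ K := by rw [hS, ← hSK] at hy; exact hy
      exact mul_mem (hFE a.2) (h1 hy')

variable {Ω : Type*} [Field Ω] [Valued Ω ZM0] [CompleteSpace Ω] (p : ℕ) [Fact p.Prime]
  [Algebra (ZMod p) Ω] (π : Ω) (hπ0 : π ≠ 0) (hπ : Valued.v π < 1)

include hπ0 hπ in
theorem pi_trans : Transcendental (ZMod p) π := by
  rintro ⟨f, hf, hfπ⟩
  apply hf
  rw [← evHom_poly p π hπ0 hπ] at hfπ
  have := (injective_iff_map_eq_zero _).1 (evHom_inj p π hπ0 hπ) _ hfπ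
  exact Polynomial.coe_eq_zero_iff.1 this

open IntermediateField in
theorem alg_ps (G : PowerSeries (ZMod p)) :
    IsAlgebraic (ZMod p)⟮π⟯ (evHom p π hπ0 hπ G) ↔ IsAlgebraic (Polynomial (ZMod p)) G := by
  rw [isAlgebraic_adjoin_iff]
  let f : Polynomial (ZMod p) →ₐ[ZMod p] Algebra.adjoin (ZMod p) {π} :=
    Polynomial.aeval ⟨π, Algebra.self_mem_adjoin_singleton (ZMod p) π⟩
  have hfv : ∀ q, ((f q : Algebra.adjoin (ZMod p) {π}) : Ω) = Polynomial.aeval π q := by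
    intro q
    have := Polynomial.aeval_algebraMap_apply Ω
      (⟨π, Algebra.self_mem_adjoin_singleton (ZMod p) π⟩ : Algebra.adjoin (ZMod p) {π}) q
    exact this.symm
  have hf : Function.Bijective f := by
    constructor
    · have htr := transcendental_iff_injective.1 (pi_trans p π hπ0 hπ)
      intro a b hab
      apply htr
      rw [← hfv, ← hfv, hab]
    · rintro ⟨y, hy⟩
      rw [Algebra.adjoin_singleton_eq_range_aeval] at hy
      obtain ⟨q, hq⟩ := hy
      exact ⟨q, Subtype.ext (by rw [hfv]; exact hq)⟩
  refine isAlgebraic_ringHom_iff_of_comp_eq (RingEquiv.ofBijective f hf) (evHom p π hπ0 hπ)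
    (evHom_inj p π hπ0 hπ) ?_
  refine RingHom.ext fun q => ?_
  have : (evHom p π hπ0 hπ) (algebraMap (Polynomial (ZMod p)) (PowerSeries (ZMod p)) q) =
      Polynomial.aeval π q := by
    rw [← evHom_poly p π hπ0 hπ]; congr 1
  exact (hfv q).trans this.symm

open IntermediateField in
include hπ0 hπ in
theorem indep_F {ι : Type*} [Fintype ι] (e : ι → Ω) (he1 : ∀ i, Valued.v (e i) ≤ 1)
    (he : ∀ c : ι → ZMod p, Valued.v (∑ i, algebraMap (ZMod p) Ω (c i) * e i) ≤ Valued.v π → c = 0) :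
    LinearIndependent (ZMod p)⟮π⟯ e := by
  open scoped algebraAdjoinAdjoin in
  rw [← LinearIndependent.iff_fractionRing (Algebra.adjoin (ZMod p) {π})]
  rw [Fintype.linearIndependent_iff]
  intro g hg
  have hq : ∀ i, ∃ q : Polynomial (ZMod p), Polynomial.aeval π q = (g i : Ω) := by
    intro i
    obtain ⟨y, hy⟩ := g i
    rw [Algebra.adjoin_singleton_eq_range_aeval] at hy
    exact hy
  choose q hq using hq
  have h := indep_ps p π hπ0 hπ e he1 he (fun i => (q i : PowerSeries (ZMod p))) (by
    rw [← hg]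
    refine Finset.sum_congr rfl fun i _ => ?_
    rw [evHom_poly, hq]; rfl)
  intro i
  have h2 : q i = 0 := Polynomial.coe_eq_zero_iff.1 (congrFun h i)
  apply Subtype.ext
  rw [← hq, h2]; simp

open IntermediateField in
include hπ0 hπ in
theorem gamma_findim (K : Subfield Ω) (hdense : Dense (K : Set Ω))
    (E : IntermediateField (ZMod p)⟮π⟯ Ω) [FiniteDimensional (ZMod p)⟮π⟯ E] (hE : ∀ x ∈ K, x ∈ E)
    (W : Submodule (ZMod p) Ω) (hW1 : ∀ x ∈ W, Valued.v x ≤ 1)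
    (hW : ∀ x ∈ W, Valued.v x ≤ Valued.v π → x = 0) : FiniteDimensional (ZMod p) W := by
  have hr : Module.rank (ZMod p) W ≤ (Module.finrank (ZMod p)⟮π⟯ E : ℕ) := by
    refine rank_le fun s hs => ?_
    have hb : ∀ i : s, ∃ b ∈ K, Valued.v (b - (i.1 : Ω)) ≤ Valued.v π := by
      intro i
      have hU : {x : Ω | Valued.v (x - (i.1 : Ω)) ≤ Valued.v π} ∈ nhds (i.1 : Ω) := by
        have h0 : {x : Ω | Valued.v x ≤ Valued.v π} ∈ nhds (0 : Ω) :=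
          (nhds0 π hπ0 hπ _).2 ⟨1, by rw [pow_one]⟩
        have ht : Filter.Tendsto (fun x : Ω => x - (i.1 : Ω)) (nhds (i.1 : Ω)) (nhds 0) := by
          have : Continuous (fun x : Ω => x - (i.1 : Ω)) := by fun_prop
          have h := this.tendsto (i.1 : Ω)
          rwa [sub_self] at h
        exact ht h0
      obtain ⟨b, hb1, hb2⟩ := (mem_closure_iff_nhds.1 (hdense (i.1 : Ω))) _ hU
      exact ⟨b, hb2, hb1⟩
    choose b hbK hbv using hb
    have hli : LinearIndependent (ZMod p)⟮π⟯ b := by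
      apply indep_F p π hπ0 hπ
      · intro i
        have : b i = (b i - (i.1 : Ω)) + (i.1 : Ω) := by ring
        rw [this]
        exact (Valued.v.map_add _ _).trans (max_le ((hbv i).trans hπ.le) (hW1 _ i.1.2))
      · intro c hc
        have h1 : Valued.v (∑ i, algebraMap (ZMod p) Ω (c i) * (i.1 : Ω)) ≤ Valued.v π := by
          have : ∑ i, algebraMap (ZMod p) Ω (c i) * (i.1 : Ω) =
              ∑ i, algebraMap (ZMod p) Ω (c i) * b i -
                ∑ i, algebraMap (ZMod p) Ω (c i) * (b i - (i.1 : Ω)) := by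
            rw [← Finset.sum_sub_distrib]
            exact Finset.sum_congr rfl fun i _ => by ring
          rw [this]
          refine (Valued.v.map_sub _ _).trans (max_le hc ?_)
          refine Valuation.map_sum_le _ fun i _ => ?_
          rw [map_mul]
          exact (mul_le_mul' (val_zmod p _) (hbv i)).trans (one_mul _).le
        have h2 : ∑ i : s, c i • (i.1 : W) = 0 := by
          apply Subtype.ext
          have h3 : ((∑ i : s, c i • (i.1 : W) : W) : Ω) =
              ∑ i, algebraMap (ZMod p) Ω (c i) * (i.1 : Ω) := by
            rw [Submodule.coe_sum]
            exact Finset.sum_congr rfl fun i _ => by rw [Submodule.coe_smul, Algebra.smul_def]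
          refine hW _ (Subtype.prop _) ?_
          rw [h3]; exact h1
        funext i
        exact (Fintype.linearIndependent_iff.1 hs) c h2 i
    have hli' : LinearIndependent (ZMod p)⟮π⟯ (fun i => (⟨b i, hE _ (hbK i)⟩ : E)) :=
      LinearIndependent.of_comp E.val.toLinearMap hli
    have := hli'.fintype_card_le_finrank
    simpa using this
  exact Module.rank_lt_aleph0_iff.1 (hr.trans_lt (Cardinal.natCast_lt_aleph0))

end AlgSec

end PartC
section CoreSec

theorem auto_comp {α β : Type*} {k : ℕ} (f : α → β) {b : ℕ → α} (h : IsKAutomatic k b) :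
    IsKAutomatic k (fun n => f (b n)) := by
  refine (h.image (fun c n => f (c n))).subset ?_
  rintro _ ⟨i, j, hj, rfl⟩
  exact ⟨_, ⟨i, j, hj, rfl⟩, rfl⟩

theorem auto_pi {α ι : Type*} [Fintype ι] {k : ℕ} {b : ι → ℕ → α} (h : ∀ i, IsKAutomatic k (b i)) :
    IsKAutomatic k (fun n i => b i n) := by
  refine ((Set.Finite.pi' h).image (fun (c : ι → ℕ → α) n i => c i n)).subset ?_
  rintro _ ⟨i, j, hj, rfl⟩
  exact ⟨fun l n => b l (n * k ^ i + j), fun l => ⟨i, j, hj, rfl⟩, rfl⟩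

variable {Ω : Type*} [Field Ω] [Valued Ω ZM0] [CompleteSpace Ω] (p : ℕ) [Fact p.Prime]
  [Algebra (ZMod p) Ω] (π : Ω) (hπ0 : π ≠ 0) (hπ : Valued.v π < 1)

open IntermediateField in
theorem exists_L : ∃ L : IntermediateField (ZMod p)⟮π⟯ Ω, (∀ G, evHom p π hπ0 hπ G ∈ L) ∧
    ∀ x ∈ L, ∃ G D, D ≠ 0 ∧ x * evHom p π hπ0 hπ D = evHom p π hπ0 hπ G := by
  let φ : FractionRing (PowerSeries (ZMod p)) →+* Ω := IsFractionRing.lift (evHom_inj p π hπ0 hπ)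
  have hφ : ∀ G, φ (algebraMap _ _ G) = evHom p π hπ0 hπ G := fun G =>
    IsFractionRing.lift_algebraMap (evHom_inj p π hπ0 hπ) G
  have hle : ((ZMod p)⟮π⟯).toSubfield ≤ φ.fieldRange := by
    refine Subfield.closure_le.2 ?_
    rintro x (⟨c, rfl⟩ | hx)
    · exact ⟨algebraMap _ _ (PowerSeries.C c), by rw [hφ, evHom_C]⟩
    · rw [Set.mem_singleton_iff.1 hx]
      exact ⟨algebraMap _ _ PowerSeries.X, by rw [hφ, evHom_X]⟩
  refine ⟨φ.fieldRange.toIntermediateField fun r => hle r.2, fun G => ⟨algebraMap _ _ G, hφ G⟩, ?_⟩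
  rintro x ⟨y, rfl⟩
  obtain ⟨G, D, hD, rfl⟩ := IsFractionRing.div_surjective (A := PowerSeries (ZMod p)) y
  have hD0 : D ≠ 0 := nonZeroDivisors.ne_zero hD
  refine ⟨G, D, hD0, ?_⟩
  have : evHom p π hπ0 hπ D ≠ 0 := fun h =>
    hD0 ((injective_iff_map_eq_zero _).1 (evHom_inj p π hπ0 hπ) _ h)
  change φ _ * _ = _
  rw [map_div₀, hφ, hφ, div_mul_cancel₀ _ this]

open IntermediateField in
theorem indep_L (L : IntermediateField (ZMod p)⟮π⟯ Ω)
    (hL : ∀ x ∈ L, ∃ G D, D ≠ 0 ∧ x * evHom p π hπ0 hπ D = evHom p π hπ0 hπ G)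
    {ι : Type*} [Fintype ι] (e : ι → Ω) (he1 : ∀ i, Valued.v (e i) ≤ 1)
    (he : ∀ c : ι → ZMod p, Valued.v (∑ i, algebraMap (ZMod p) Ω (c i) * e i) ≤ Valued.v π → c = 0) :
    LinearIndependent L e := by
  classical
  rw [Fintype.linearIndependent_iff]
  intro g hg
  choose G D hD hGD using fun i => hL (g i) (g i).2
  have h := indep_ps p π hπ0 hπ e he1 he (fun i => G i * ∏ j ∈ Finset.univ.erase i, D j) (by
    have h2 : (∏ j, evHom p π hπ0 hπ (D j)) * ∑ i, g i • e i = 0 := by rw [hg, mul_zero]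
    rw [← h2, Finset.mul_sum]
    refine Finset.sum_congr rfl fun i _ => ?_
    rw [map_mul, map_prod, ← hGD, ← Finset.mul_prod_erase Finset.univ _ (Finset.mem_univ i),
      Algebra.smul_def]
    change _ = _ * ((g i : Ω) * e i)
    ring)
  intro i
  have hi := congrFun h i
  have hG : G i = 0 := by
    refine (mul_eq_zero.1 hi).resolve_right ?_
    exact Finset.prod_ne_zero_iff.2 fun j _ => hD j
  have h3 := hGD i
  rw [hG, map_zero] at h3
  have : evHom p π hπ0 hπ (D i) ≠ 0 := fun h =>
    hD i ((injective_iff_map_eq_zero _).1 (evHom_inj p π hπ0 hπ) _ h)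
  exact Subtype.ext ((mul_eq_zero.1 h3).resolve_right this)

theorem expand (W : Submodule (ZMod p) Ω) (hW1 : ∀ x ∈ W, Valued.v x ≤ 1)
    {ι : Type*} [Fintype ι] (b : Module.Basis ι (ZMod p) W) (γ : ℕ → W) :
    ∑' n, (γ n : Ω) * π ^ n =
      ∑ i, evHom p π hπ0 hπ (PowerSeries.mk fun n => b.repr (γ n) i) * (b i : Ω) := by
  have h : ∀ n, (γ n : Ω) * π ^ n =
      ∑ i, (algebraMap (ZMod p) Ω (b.repr (γ n) i) * π ^ n) * (b i : Ω) := by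
    intro n
    have := congrArg (fun w : W => (w : Ω)) (b.sum_repr (γ n))
    simp only [Submodule.coe_sum, Submodule.coe_smul, Algebra.smul_def] at this
    rw [← this, Finset.sum_mul]
    refine Finset.sum_congr rfl fun i _ => ?_
    ring
  rw [tsum_congr h, Summable.tsum_finsetSum]
  · refine Finset.sum_congr rfl fun i _ => ?_
    rw [tsum_mul_right, evHom_apply]
    simp only [PowerSeries.coeff_mk]
  · intro i _
    exact (summ π hπ0 hπ _ fun n => val_zmod p _).mul_right _

include hπ0 hπ in
theorem exists_digits (W : Set Ω) (hW1 : ∀ x ∈ W, Valued.v x ≤ 1)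
    (hrep : ∀ x : Ω, Valued.v x ≤ 1 → ∃ w ∈ W, Valued.v (x - w) ≤ Valued.v π)
    (x : Ω) (hx : Valued.v x ≤ 1) : ∃ γ : ℕ → W, x = ∑' n, (γ n : Ω) * π ^ n := by
  choose w hwW hw using fun x : {x : Ω // Valued.v x ≤ 1} => hrep x.1 x.2
  have hvπ : Valued.v π ≠ 0 := (Valuation.ne_zero_iff _).2 hπ0
  let nx : {x : Ω // Valued.v x ≤ 1} → {x : Ω // Valued.v x ≤ 1} := fun x =>
    ⟨(x.1 - w x) / π, by
      rw [map_div₀]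
      exact div_le_one_of_le₀ (hw x) zero_le⟩
  let X : ℕ → {x : Ω // Valued.v x ≤ 1} := fun n => nx^[n] ⟨x, hx⟩
  let γ : ℕ → W := fun n => ⟨w (X n), hwW _⟩
  have hγ1 : ∀ n, Valued.v (γ n : Ω) ≤ 1 := fun n => hW1 _ (γ n).2
  have hX : ∀ n, (X n : Ω) = γ n + π * X (n + 1) := by
    intro n
    have : X (n + 1) = nx (X n) := Function.iterate_succ_apply' _ _ _
    rw [this]
    change (X n : Ω) = w (X n) + π * (((X n).1 - w (X n)) / π)
    field_simp
    ring
  refine ⟨γ, ?_⟩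
  have hst : ∀ k, x - ∑' n, (γ n : Ω) * π ^ n =
      π ^ k * ((X k : Ω) - ∑' n, (γ (n + k) : Ω) * π ^ n) := by
    intro k
    induction k with
    | zero => rw [pow_zero, one_mul]; rfl
    | succ k ih =>
      rw [ih, tsum_split π hπ0 hπ (fun n => (γ (n + k) : Ω)) (fun n => hγ1 _), hX k, zero_add]
      have : ∀ n, n + 1 + k = n + (k + 1) := fun n => by ring
      simp only [this]
      ring
  by_contra hne
  have hne' : Valued.v (x - ∑' n, (γ n : Ω) * π ^ n) ≠ 0 :=
    (Valuation.ne_zero_iff _).2 (sub_ne_zero.2 hne)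
  obtain ⟨n, hn⟩ := exists_pow_lt₀ hπ (Units.mk0 _ hne')
  rw [Units.val_mk0, hst n, map_mul, map_pow] at hn
  refine absurd hn (not_lt.2 ?_)
  refine mul_le_of_le_one_right' ?_
  exact (Valued.v.map_sub _ _).trans (max_le (X n).2 (tsum_le π hπ0 hπ _ fun n => hγ1 _))

open IntermediateField in
theorem core (K : Subfield Ω) (hdense : Dense (K : Set Ω))
    (x₀ : Ω) (hx₀ : x₀ ∈ K) (htr : Transcendental (⊥ : Subfield Ω) x₀)
    (hdeg : Module.rank (Subfield.closure {x₀}) (Submodule.span (Subfield.closure {x₀}) (K : Set Ω)) <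
      Cardinal.aleph0) (hπalg : IsAlgebraic K π)
    (hπ0 : π ≠ 0) (hπ : Valued.v π < 1)
    (W : Submodule (ZMod p) Ω) (hW1 : ∀ x ∈ W, Valued.v x ≤ 1)
    (hW : ∀ x ∈ W, Valued.v x ≤ Valued.v π → x = 0)
    (hrep : ∀ x : Ω, Valued.v x ≤ 1 → ∃ w ∈ W, Valued.v (x - w) ≤ Valued.v π)
    (hWalg : ∀ x ∈ W, IsAlgebraic K x) (γ : ℕ → W) :
    IsAlgebraic K (∑' n, (γ n : Ω) * π ^ n) ↔ IsKAutomatic p γ := by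
  obtain ⟨E, hEfd, hE⟩ := K_finite p K x₀ hx₀ htr hdeg π hπalg (pi_trans p π hπ0 hπ)
  have hWfd := gamma_findim p π hπ0 hπ K hdense E hE W hW1 hW
  let b := Module.finBasis (ZMod p) W
  have he1 : ∀ i, Valued.v (b i : Ω) ≤ 1 := fun i => hW1 _ (b i).2
  have he : ∀ c : Fin (Module.finrank (ZMod p) W) → ZMod p,
      Valued.v (∑ i, algebraMap (ZMod p) Ω (c i) * (b i : Ω)) ≤ Valued.v π → c = 0 := by
    intro c hc
    have h3 : ((∑ i, c i • b i : W) : Ω) = ∑ i, algebraMap (ZMod p) Ω (c i) * (b i : Ω) := by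
      rw [Submodule.coe_sum]
      exact Finset.sum_congr rfl fun i _ => by rw [Submodule.coe_smul, Algebra.smul_def]
    have h2 : ∑ i, c i • b i = 0 := by
      apply Subtype.ext
      refine hW _ (Subtype.prop _) ?_
      rw [h3]; exact hc
    funext i
    exact (Fintype.linearIndependent_iff.1 b.linearIndependent) c h2 i
  have hKF : ∀ r : K, IsAlgebraic (ZMod p)⟮π⟯ (algebraMap K Ω r) := fun r => by
    have h := IsAlgebraic.of_finite (ZMod p)⟮π⟯ (⟨r, hE _ r.2⟩ : E)
    exact h.algebraMap (A := Ω)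
  have hFK : ∀ r : (ZMod p)⟮π⟯, IsAlgebraic K (algebraMap (ZMod p)⟮π⟯ Ω r) := by
    have hle : ((ZMod p)⟮π⟯).toSubfield ≤ (algebraicClosure K Ω).toSubfield := by
      refine Subfield.closure_le.2 ?_
      rintro x (⟨c, rfl⟩ | hx)
      · have : algebraMap (ZMod p) Ω c = ((c.val : ℕ) : Ω) := by
          rw [← map_natCast (algebraMap (ZMod p) Ω)]; simp
        rw [this]; exact _root_.natCast_mem _ _
      · rw [Set.mem_singleton_iff.1 hx]
        exact mem_algebraicClosure_iff.2 hπalg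
    exact fun r => mem_algebraicClosure_iff.1 (hle r.2)
  have hexp := expand p π hπ0 hπ W hW1 b γ
  constructor
  · intro hy
    have hyF := alg_trans hKF _ hy
    obtain ⟨L, hL1, hL2⟩ := exists_L p π hπ0 hπ
    have hli := indep_L p π hπ0 hπ L hL2 (fun i => (b i : Ω)) he1 he
    have hsp : ⊤ ≤ Submodule.span L (Set.range fun i => (b i : Ω)) := by
      rintro x -
      have hint : ∀ x : Ω, Valued.v x ≤ 1 → x ∈ Submodule.span L (Set.range fun i => (b i : Ω)) := by
        intro x hx
        obtain ⟨δ, hδ⟩ := exists_digits π hπ0 hπ (W : Set Ω) hW1 hrep x hx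
        have := expand p π hπ0 hπ W hW1 b δ
        rw [hδ, this]
        refine Submodule.sum_mem _ fun i _ => ?_
        exact Submodule.smul_mem _ (⟨_, hL1 _⟩ : L) (Submodule.subset_span ⟨i, rfl⟩)
      by_cases hx0 : x = 0
      · rw [hx0]; exact zero_mem _
      have hvx : (Valued.v x)⁻¹ ≠ 0 := inv_ne_zero ((Valuation.ne_zero_iff _).2 hx0)
      obtain ⟨n, hn⟩ := exists_pow_lt₀ hπ (Units.mk0 _ hvx)
      rw [Units.val_mk0] at hn
      have h1 : Valued.v (π ^ n * x) ≤ 1 := by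
        rw [map_mul, map_pow]
        calc _ ≤ (Valued.v x)⁻¹ * Valued.v x := mul_le_mul' hn.le le_rfl
          _ = 1 := inv_mul_cancel₀ ((Valuation.ne_zero_iff _).2 hx0)
      have hπL : (π ^ n)⁻¹ ∈ L := by
        have := hL1 PowerSeries.X
        rw [evHom_X] at this
        exact inv_mem (pow_mem this n)
      have h2 := Submodule.smul_mem _ (⟨_, hπL⟩ : L) (hint _ h1)
      have h3 : (⟨_, hπL⟩ : L) • (π ^ n * x) = x := by
        change (π ^ n)⁻¹ * (π ^ n * x) = x
        rw [inv_mul_cancel_left₀ (pow_ne_zero _ hπ0)]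
      rwa [h3] at h2
    obtain ⟨g, hg, hgS⟩ := simple_gen' (ZMod p) Ω π (pi_trans p π hπ0 hπ)
      (insert (∑' n, (γ n : Ω) * π ^ n) (Set.range fun i => (b i : Ω)))
      ((Set.finite_range _).insert _) (by
        rintro x (rfl | ⟨i, rfl⟩)
        · exact hyF
        · exact alg_trans hKF _ (hWalg _ (b i).2))
    have hco : ∀ i, IsKAutomatic p (fun n => b.repr (γ n) i) := by
      intro i
      have h := coords_alg (ZMod p)⟮π⟯ Ω L (fun i => (b i : Ω)) hli hsp g hg
        (fun i => hgS (Set.mem_insert_of_mem _ ⟨i, rfl⟩))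
        (fun i => ⟨_, hL1 (PowerSeries.mk fun n => b.repr (γ n) i)⟩)
        (by
          have := hgS (Set.mem_insert _ _)
          rw [hexp] at this
          exact this) i
      have h2 := auto_of_alg p _ ((alg_ps p π hπ0 hπ _).1 h)
      simpa only [PowerSeries.coeff_mk] using h2
    have h := auto_comp (fun c => b.equivFun.symm c) (auto_pi hco)
    have h3 : (fun n => b.equivFun.symm (fun i => b.repr (γ n) i)) = γ := by
      funext n
      exact b.equivFun.symm_apply_apply (γ n)
    rwa [h3] at h
  · intro h
    rw [hexp]
    refine mem_algebraicClosure_iff.1 (sum_mem fun i _ => mul_mem ?_ ?_)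
    · refine mem_algebraicClosure_iff.2 (alg_trans hFK _ ((alg_ps p π hπ0 hπ _).2 (alg_of_auto p _ ?_)))
      simp only [PowerSeries.coeff_mk]
      exact auto_comp (fun w => b.repr w i) h
    · exact mem_algebraicClosure_iff.2 (hWalg _ (b i).2)

end CoreSec

/-- Suppose `Γ` is additively closed with `π` and all elements of `Γ` algebraic
over `K`, and let `ξ ∈ A_v` be algebraic over `K`.  Then the translate
`Γ + ξ = {γ + ξ : γ ∈ Γ}` is a complete set of representatives of `A_v/πA_v`
and `(Γ + ξ, π)` has property B. -/
theorem propertyB_of_translate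
    {Kv : Type*} [Field Kv] [Valued Kv ZM0]
    (p : ℕ) [Fact p.Prime] (K : Subfield Kv)
    (hK : IsGlobalFunctionFieldCompletion p K)
    (π : Kv) (hπ0 : π ≠ 0) (hπ : Valued.v π < 1)
    (Γ : Set Kv) (hΓ : IsCompleteSetOfReps π Γ)
    (hadd : ∀ μ ∈ Γ, ∀ ν ∈ Γ, μ + ν ∈ Γ)
    (hπalg : IsAlgebraic ↥K π) (hΓalg : ∀ γ ∈ Γ, IsAlgebraic ↥K γ)
    (ξ : Kv) (hξA : Valued.v ξ ≤ 1) (hξalg : IsAlgebraic ↥K ξ) :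
    IsCompleteSetOfReps π ((fun γ => γ + ξ) '' Γ) ∧
      HasPropertyB p K π ((fun γ => γ + ξ) '' Γ) := by
  have hcp := hK.charP
  have hcs := hK.complete
  letI : Algebra (ZMod p) Kv := ZMod.algebra Kv p
  obtain ⟨x₀, hx₀, htr, hdeg⟩ := hK.globalFunctionField
  have hp2 : 2 ≤ p := (Fact.out : p.Prime).two_le
  have hsm : ∀ γ ∈ Γ, ∀ n : ℕ, (n + 1) • γ ∈ Γ := by
    intro γ hγ n
    induction n with
    | zero => simpa using hγ
    | succ n ih => rw [succ_nsmul]; exact hadd _ ih _ hγ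
  have hzero : (0 : Kv) ∈ Γ := by
    obtain ⟨γ, ⟨hγ, _⟩, _⟩ := hΓ.2 0 (by simp)
    have h := hsm γ hγ (p - 1)
    have h2 : p - 1 + 1 = p := by omega
    rw [h2, nsmul_eq_mul, CharP.cast_eq_zero, zero_mul] at h
    exact h
  let G : AddSubgroup Kv :=
    { carrier := Γ
      zero_mem' := hzero
      add_mem' := fun {a b} ha hb => hadd a ha b hb
      neg_mem' := fun {a} ha => by
        have h := hsm a ha (p - 2)
        have h2 : p - 2 + 1 = p - 1 := by omega
        rw [h2] at h
        have h3 : (p - 1) • a = -a := by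
          rw [eq_neg_iff_add_eq_zero, ← succ_nsmul]
          have h4 : p - 1 + 1 = p := by omega
          rw [h4, nsmul_eq_mul, CharP.cast_eq_zero, zero_mul]
        rw [h3] at h
        exact h }
  let W : Submodule (ZMod p) Kv := AddSubgroup.toZModSubmodule p G
  have hWΓ : ∀ x, x ∈ W ↔ x ∈ Γ := fun x => Iff.rfl
  have hW1 : ∀ x ∈ W, Valued.v x ≤ 1 := fun x hx => hΓ.1 x hx
  have hW : ∀ x ∈ W, Valued.v x ≤ Valued.v π → x = 0 := by
    intro x hx hxv
    obtain ⟨γ, _, hu⟩ := hΓ.2 0 (by simp)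
    rw [hu x ⟨hx, by rwa [zero_sub, Valuation.map_neg]⟩, hu 0 ⟨hzero, by simp⟩]
  have hrep : ∀ x : Kv, Valued.v x ≤ 1 → ∃ w ∈ W, Valued.v (x - w) ≤ Valued.v π := by
    intro x hx
    obtain ⟨γ, ⟨h1, h2⟩, _⟩ := hΓ.2 x hx
    exact ⟨γ, h1, h2⟩
  constructor
  · constructor
    · rintro _ ⟨γ, hγ, rfl⟩
      exact (Valued.v.map_add _ _).trans (max_le (hΓ.1 γ hγ) hξA)
    · intro x hx
      obtain ⟨γ, ⟨h1, h2⟩, hu⟩ := hΓ.2 (x - ξ) ((Valued.v.map_sub _ _).trans (max_le hx hξA))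
      refine ⟨γ + ξ, ⟨⟨γ, h1, rfl⟩, ?_⟩, ?_⟩
      · have : x - (γ + ξ) = x - ξ - γ := by ring
        rw [this]; exact h2
      · rintro _ ⟨⟨δ, hδ, rfl⟩, h3⟩
        have h4 : x - (δ + ξ) = x - ξ - δ := by ring
        have h3' : Valued.v (x - (δ + ξ)) ≤ Valued.v π := h3
        rw [h4] at h3'
        have := hu δ ⟨hδ, h3'⟩
        change δ + ξ = γ + ξ
        rw [this]
  · intro x m a ⟨hdig, hsum⟩
    have hd : ∀ n : ℕ, a (m + n) - ξ ∈ Γ := by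
      intro n
      obtain ⟨γ, hγ, h⟩ := hdig (m + n) (by omega)
      rw [← h]
      simpa using hγ
    let γ : ℕ → W := fun n => ⟨a (m + n) - ξ, hd n⟩
    have hcore := core p π K hK.dense x₀ hx₀ htr hdeg hπalg hπ0 hπ W hW1 hW hrep
      (fun x hx => hΓalg x hx) γ
    have h1π : (1 : Kv) - π ≠ 0 := by
      intro h
      rw [sub_eq_zero] at h
      rw [← h, map_one] at hπ
      exact lt_irrefl _ hπ
    have hγs := summ π hπ0 hπ (fun n => (γ n : Kv)) fun n => hW1 _ (γ n).2
    have hξs := summ π hπ0 hπ (fun _ => ξ) fun _ => hξA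
    have hξsum : ∑' n : ℕ, ξ * π ^ n = ξ / (1 - π) := by
      rw [eq_div_iff h1π]
      have := tsum_split π hπ0 hπ (fun _ => ξ) fun _ => hξA
      linear_combination this
    have hx : x = π ^ m * (∑' n, (γ n : Kv) * π ^ n + ξ / (1 - π)) := by
      rw [← hξsum, ← hγs.tsum_add hξs, ← tsum_mul_left, ← hsum.tsum_eq]
      refine tsum_congr fun n => ?_
      change a (m + n) * π ^ (m + (n : ℤ)) = π ^ m * ((a (m + n) - ξ) * π ^ n + ξ * π ^ n)
      rw [zpow_add₀ hπ0, zpow_natCast]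
      ring
    have hy : ∑' n, (γ n : Kv) * π ^ n = x / π ^ m - ξ / (1 - π) := by
      rw [hx, mul_div_cancel_left₀ _ (zpow_ne_zero _ hπ0), add_sub_cancel_right]
    have hπm := mem_algebraicClosure_iff.2 hπalg
    have hξm := mem_algebraicClosure_iff.2 hξalg
    have hpm : π ^ m ∈ algebraicClosure K Kv := zpow_mem hπm m
    have hqm : ξ / (1 - π) ∈ algebraicClosure K Kv := div_mem hξm (sub_mem (one_mem _) hπm)
    have halg : IsAlgebraic K x ↔ IsAlgebraic K (∑' n, (γ n : Kv) * π ^ n) := by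
      rw [← mem_algebraicClosure_iff, ← mem_algebraicClosure_iff]
      constructor
      · intro h
        rw [hy]
        exact sub_mem (div_mem h hpm) hqm
      · intro h
        rw [hx]
        exact mul_mem hpm (add_mem h hqm)
    rw [halg, hcore]
    constructor
    · intro h
      have := auto_comp (fun w : W => (w : Kv) + ξ) h
      have h2 : (fun n : ℕ => ((γ n : W) : Kv) + ξ) = fun n : ℕ => a (m + n) := by
        funext n
        change a (m + n) - ξ + ξ = _
        ring
      rwa [h2] at this
    · intro h
      classical
      have := auto_comp (fun y : Kv => if h : y - ξ ∈ W then (⟨y - ξ, h⟩ : W) else 0) h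
      have h2 : (fun n : ℕ => if h : a (m + n) - ξ ∈ W then (⟨a (m + n) - ξ, h⟩ : W) else 0) = γ := by
        funext n
        exact dif_pos (hd n)
      rwa [h2] at this
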